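/- arXiv:1207.4642 — 3 statements merged into one kernel-verified Lean document; each statement's English description precedes it below -/
import Mathlib

section
/- Let g ∈ PC[0,1] be non-constant with jump locations t_1 < ... < t_n, minimal jump height h_min, maximal jump height h_max and minimal interval length l_min, let K be a symmetric, nonnegative, normalized kernel with supp K ⊆ [−κ,κ] strictly positive near 0, and let X^k = {x_1,...,x_m} ⊆ [0,1] be a discretization set of mesh size η = max_i |x_i − x_{i−1}|. Assume κ + η ≤ h_min·l_min / (2·(8·h_max + h_min)) and let γ satisfy 2·(κ+η)·h_max ≤ γ ≤ (1/2)·h_min·l_min − (h_min + 6·h_max)·(κ+η). Let g^k be any X^k-discretization of g, obtained by moving each jump location t_i of g to a nearest point of X^k, and let f^k = Σ_j S_k f(j)·1_{I_j} be obtained from f = K*g by integral or point sampling on X^k. Then g^k is a minimizer of the discrete L¹-Potts functional P_γ^k(u) = γ·J(u) + ‖u − f^k‖_{L¹} over u ∈ PC^k[0,1]; the X^k-discretizations of g of this type are the only minimizers, so the minimizer is unique whenever each jump location of g has a unique nearest neighbor in X^k; and if (X^k) is a nested sequence of discretization sets whose union is dense in [0,1], every sequence of minimizers g^k converges to g in L¹[0,1].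 -/
open MeasureTheory Filter Set
open scoped ENNReal Classical

noncomputable section

/-- The Lebesgue measure restricted to `[0,1]`. -/
def mu01 : Measure ℝ := volume.restrict (Set.Icc (0:ℝ) 1)

/-- The step function determined by partition points `x` and values `a`. -/
def stepF {m : ℕ} (x : Fin (m + 1) → ℝ) (a : Fin m → ℝ) : ℝ → ℝ := fun t =>
  ∑ l : Fin m, Set.indicator (Set.Ioo (x l.castSucc) (x l.succ)) (fun _ => a l) t

/-- `u` is a.e. on `[0,1]` represented by the step function with partition `x` and values `a`. -/
def IsPCRep (u : ℝ → ℝ) {m : ℕ} (x : Fin (m + 1) → ℝ) (a : Fin m → ℝ) : Prop :=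
  StrictMono x ∧ x 0 = 0 ∧ x (Fin.last m) = 1 ∧ ∀ᵐ t ∂mu01, u t = stepF x a t

/-- `u` is piecewise constant on `[0,1]` (up to a.e. equality). -/
def IsPC (u : ℝ → ℝ) : Prop :=
  ∃ (m : ℕ) (x : Fin (m + 1) → ℝ) (a : Fin m → ℝ), IsPCRep u x a

/-- The number of jumps `J(u)`: the minimal number of interior partition points over all
piecewise constant representations of `u`. -/
def jumps (u : ℝ → ℝ) : ℕ :=
  sInf {jj : ℕ | ∃ (x : Fin (jj + 2) → ℝ) (a : Fin (jj + 1) → ℝ), IsPCRep u x a}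

/-- `u` is piecewise constant with all jump locations inside `S`. -/
def IsPCIn (u : ℝ → ℝ) (S : Set ℝ) : Prop :=
  ∃ (m : ℕ) (x : Fin (m + 1) → ℝ) (a : Fin m → ℝ), IsPCRep u x a ∧
    ∀ i : Fin (m + 1), i ≠ 0 → i ≠ Fin.last m → x i ∈ S

/-- The `L¹[0,1]` distance of two functions. -/
def L1dist (u v : ℝ → ℝ) : ℝ := ∫ t, |u t - v t| ∂mu01

/-- The continuous `L¹`-Potts functional `P_γ` with data `f`. -/
def Potts (γ : ℝ) (f u : ℝ → ℝ) : ℝ≥0∞ :=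
  if IsPC u then ENNReal.ofReal (γ * (jumps u : ℝ) + L1dist u f) else ⊤

/-- The (semi-)discrete `L¹`-Potts functional with data `f`, restricted to piecewise
constant functions whose jumps lie in `S`. -/
def PottsIn (γ : ℝ) (f : ℝ → ℝ) (S : Set ℝ) (u : ℝ → ℝ) : ℝ≥0∞ :=
  if IsPCIn u S then ENNReal.ofReal (γ * (jumps u : ℝ) + L1dist u f) else ⊤

/-- Convolution `(K*g)(t) = ∫ K(s)·g(t−s) ds`. -/
def convK (K g : ℝ → ℝ) : ℝ → ℝ := fun t => ∫ s, K s * g (t - s)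

/-- The piecewise constant function on `ℝ` with jump locations `j` and values `α`
(extended constantly outside the jump region): at `t`, its value is `α i` where `i`
is the number of jump locations strictly below `t`. -/
def stepOn {n : ℕ} (j : Fin n → ℝ) (α : Fin (n + 1) → ℝ) : ℝ → ℝ := fun t =>
  α ⟨(Finset.univ.filter fun i => j i < t).card,
      Nat.lt_succ_of_le ((Finset.card_filter_le _ _).trans (by simp))⟩

/-- The jump locations together with the endpoints `0` and `1`. -/
def jext {n : ℕ} (j : Fin (n + 1) → ℝ) : Fin (n + 3) → ℝ :=
  Fin.cons (0 : ℝ) (Fin.snoc j (1 : ℝ))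

/-- The minimal length `l_min` of the intervals of constancy (inside `[0,1]`). -/
def lmin {n : ℕ} (j : Fin (n + 1) → ℝ) : ℝ :=
  Finset.univ.inf' Finset.univ_nonempty
    fun i : Fin (n + 2) => jext j i.succ - jext j i.castSucc

/-- The minimal jump height `h_min`. -/
def hjumpMin {n : ℕ} (α : Fin (n + 2) → ℝ) : ℝ :=
  Finset.univ.inf' Finset.univ_nonempty fun i : Fin (n + 1) => |α i.succ - α i.castSucc|

/-- The maximal jump height `h_max`. -/
def hjumpMax {n : ℕ} (α : Fin (n + 2) → ℝ) : ℝ :=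
  Finset.univ.sup' Finset.univ_nonempty fun i : Fin (n + 1) => |α i.succ - α i.castSucc|

/-- The (real-valued) `L¹`-Potts value `γ·J(u) + ‖u − f‖₁` for piecewise constant `u`. -/
def PottsVal (γ : ℝ) (f u : ℝ → ℝ) : ℝ := γ * (jumps u : ℝ) + L1dist u f

/-- `fk` agrees, on each interval between consecutive discretization points of
`{0,1} ∪ X`, with the average of `f` over that interval (integral sampling). -/
def IntegralSampled (X : Set ℝ) (f fk : ℝ → ℝ) : Prop :=
  ∀ a b : ℝ, a ∈ insert (0:ℝ) (insert 1 X) → b ∈ insert (0:ℝ) (insert 1 X) → a < b →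
    Set.Ioo a b ∩ X = ∅ →
    ∀ t ∈ Set.Ioo a b, fk t = (b - a)⁻¹ * ∫ s in Set.Ioo a b, f s

/-- `fk` agrees, on each interval between consecutive discretization points of
`{0,1} ∪ X`, with the value of `f` at the midpoint of that interval (point sampling). -/
def PointSampled (X : Set ℝ) (f fk : ℝ → ℝ) : Prop :=
  ∀ a b : ℝ, a ∈ insert (0:ℝ) (insert 1 X) → b ∈ insert (0:ℝ) (insert 1 X) → a < b →
    Set.Ioo a b ∩ X = ∅ →
    ∀ t ∈ Set.Ioo a b, fk t = f ((a + b) / 2)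

/- Around each jump of `g` take the window of radius `r = l_min / 2`. The windows are disjoint, and
outside the transition zones of radius `δ = κ + η` at the jumps the data `f^k` coincide with `g`.
In a window in which the data go from the plateau value `p` to `q`, a function without a jump has
error at least `(r - δ) |q - p|`, too much compared with the price `γ` of a jump, whereas two
jumps cost `2γ`, also too much. With exactly one jump the cost is at least
`γ + ∫ min |p - f^k| |q - f^k|`, since both plateaus are longer than the transition zone, with
equality only if the jump is from `p` to `q` and every sampled value is approximated by the nearer
of `p` and `q`. By the symmetry of `K`, a sampled value is nearer to `q` exactly if the midpoint of
its cell lies to the right of the jump of `g`; hence equality holds exactly if the jump is at a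
nearest neighbour of the jump of `g`. -/

section SetIntegral

variable {Ω : Type*} [MeasurableSpace Ω] {μ : Measure Ω} {S : Set Ω} {f : Ω → ℝ} {p q c : ℝ}

lemma integrableOn_abs_const_sub (hf : IntegrableOn f S μ) (hS : μ S ≠ ∞) (c : ℝ) :
    IntegrableOn (fun t => |c - f t|) S μ :=
  ((integrableOn_const hS).sub hf).abs

lemma setIntegral_abs_sub_eq_of_ae_eq {u : Ω → ℝ} (hS : MeasurableSet S)
    (hu : ∀ᵐ t ∂μ, t ∈ S → u t = c) :
    ∫ t in S, |u t - f t| ∂μ = ∫ t in S, |c - f t| ∂μ :=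
  setIntegral_congr_ae hS (hu.mono fun t ht h => by rw [ht h])

lemma setIntegral_add_mul_le_setIntegral_abs_sub {P M : Set Ω} (hSm : MeasurableSet S)
    (hPm : MeasurableSet P) (hMm : MeasurableSet M) (hPS : P ⊆ S) (hMS : M ⊆ S) (hS : μ S ≠ ∞)
    {e : Ω → ℝ} (hf : IntegrableOn f S μ) (he : IntegrableOn e S μ)
    (hP : ∀ᵐ t ∂μ, t ∈ P → f t = p) (hle : ∀ᵐ t ∂μ, t ∈ S → e t ≤ |p - f t|)
    (hM : ∀ᵐ t ∂μ, t ∈ S → t ∉ M → e t ≤ 0) (c : ℝ) :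
    (∫ t in S, e t ∂μ) + |c - p| * (μ.real P - μ.real M) ≤ ∫ t in S, |c - f t| ∂μ := by
  have hconst : ∀ {A : Set Ω}, MeasurableSet A →
      IntegrableOn (A.indicator fun _ => |c - p|) S μ :=
    fun hA => Integrable.indicator (integrableOn_const hS) hA
  have hindicator : ∀ {A : Set Ω}, MeasurableSet A → A ⊆ S →
      ∫ t in S, A.indicator (fun _ => |c - p|) t ∂μ = |c - p| * μ.real A := by
    intro A hA hAS
    rw [setIntegral_indicator hA, inter_eq_right.2 hAS, setIntegral_const, smul_eq_mul, mul_comm]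
  have hmono : ∫ t in S, (e t + P.indicator (fun _ => |c - p|) t) ∂μ ≤
      ∫ t in S, (|c - f t| + M.indicator (fun _ => |c - p|) t) ∂μ := by
    refine setIntegral_mono_on_ae (he.add (hconst hPm))
      ((integrableOn_abs_const_sub hf hS c).add (hconst hMm)) hSm ?_
    filter_upwards [hP, hle, hM] with t htP hle htM ht
    have htri := abs_sub_le p c (f t)
    rw [abs_sub_comm p c] at htri
    by_cases htPmem : t ∈ P
    · have hle := hle ht
      have := indicator_nonneg (s := M) (f := fun _ => |c - p|) (fun _ _ => abs_nonneg _) t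
      rw [htP htPmem, sub_self, abs_zero] at hle
      rw [htP htPmem, indicator_of_mem htPmem]
      linarith
    · rw [indicator_of_notMem htPmem, add_zero]
      by_cases htMmem : t ∈ M
      · rw [indicator_of_mem htMmem]
        linarith [hle ht]
      · rw [indicator_of_notMem htMmem, add_zero]
        exact (htM ht htMmem).trans (abs_nonneg _)
  rw [integral_add he (hconst hPm),
    integral_add (integrableOn_abs_const_sub hf hS c) (hconst hMm), hindicator hPm hPS,
    hindicator hMm hMS] at hmono
  linarith

lemma mul_abs_sub_le_setIntegral_abs_sub {P Q : Set Ω} (hPm : MeasurableSet P)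
    (hQm : MeasurableSet Q) (hPS : P ⊆ S) (hQS : Q ⊆ S) (hPQ : Disjoint P Q) (hS : μ S ≠ ∞)
    (hf : IntegrableOn f S μ) (hP : ∀ᵐ t ∂μ, t ∈ P → f t = p) (hQ : ∀ᵐ t ∂μ, t ∈ Q → f t = q)
    (c : ℝ) :
    min (μ.real P) (μ.real Q) * |q - p| ≤ ∫ t in S, |c - f t| ∂μ := by
  have hint := integrableOn_abs_const_sub hf hS c
  calc min (μ.real P) (μ.real Q) * |q - p|
      ≤ min (μ.real P) (μ.real Q) * (|c - p| + |c - q|) := by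
        refine mul_le_mul_of_nonneg_left ?_ (le_min measureReal_nonneg measureReal_nonneg)
        linarith [abs_sub_le q c p, abs_sub_comm q c]
    _ ≤ μ.real P * |c - p| + μ.real Q * |c - q| := by
        rw [mul_add]
        gcongr
        · exact min_le_left _ _
        · exact min_le_right _ _
    _ = ∫ t in P ∪ Q, |c - f t| ∂μ := by
        rw [setIntegral_union hPQ hQm (hint.mono_set hPS) (hint.mono_set hQS),
          setIntegral_congr_ae hPm (hP.mono fun t ht h => by rw [ht h]),
          setIntegral_congr_ae hQm (hQ.mono fun t ht h => by rw [ht h]),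
          setIntegral_const, setIntegral_const, smul_eq_mul, smul_eq_mul]
    _ ≤ ∫ t in S, |c - f t| ∂μ :=
        setIntegral_mono_set hint (Eventually.of_forall fun _ => abs_nonneg _)
          (union_subset hPS hQS).eventuallyLE

end SetIntegral

section Ioo

lemma setIntegral_Ioo_split {a x b : ℝ} (hax : a ≤ x) (hxb : x ≤ b) {F : ℝ → ℝ}
    (hF : IntegrableOn F (Ioo a b)) :
    ∫ t in Ioo a b, F t = (∫ t in Ioo a x, F t) + ∫ t in Ioo x b, F t := by
  have hI : IntegrableOn F (Ioc a b) := (integrableOn_Ioc_iff_integrableOn_Ioo (by simp)).2 hF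
  rw [← integral_Ioc_eq_integral_Ioo, ← integral_Ioc_eq_integral_Ioo,
    ← integral_Ioc_eq_integral_Ioo, ← setIntegral_union (Ioc_disjoint_Ioc_of_le le_rfl)
      measurableSet_Ioc (hI.mono_set (Ioc_subset_Ioc_right hxb))
      (hI.mono_set (Ioc_subset_Ioc_left hax)), Ioc_union_Ioc_eq_Ioc hax hxb]

lemma ae_mem_Ioo_of_ae_split {a x b : ℝ} {Q : ℝ → Prop}
    (hl : ∀ᵐ t, t ∈ Ioo a x → Q t) (hr : ∀ᵐ t, t ∈ Ioo x b → Q t) :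
    ∀ᵐ t, t ∈ Ioo a b → Q t := by
  filter_upwards [hl, hr, Measure.ae_ne volume x] with t htl htr htx ht
  rcases htx.lt_or_gt with h | h
  · exact htl ⟨ht.1, h⟩
  · exact htr ⟨h, ht.2⟩

lemma exists_mem_Ioo_of_ae {a b : ℝ} (hab : a < b) {Q : ℝ → Prop}
    (hQ : ∀ᵐ t, t ∈ Ioo a b → Q t) : ∃ t ∈ Ioo a b, Q t := by
  by_contra! h
  refine (isOpen_Ioo.measure_pos volume (nonempty_Ioo.2 hab)).ne' ?_
  rw [← compl_mem_ae_iff]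
  filter_upwards [hQ] with t ht htI
  exact h t htI (ht htI)

end Ioo

section Window

/-- The distance from `z` to the nearer of the two plateau values `p` and `q`: the least
possible error at a point with data `z` of a function with values in `{p, q}`. -/
def plateauDist (p q z : ℝ) : ℝ := min |p - z| |q - z|

/-- `f` is a blurred jump at `x` from `p` to `q`: within the window `(x - r, x + r)` it takes the
plateau values `p` and `q` to the left and right of the transition zone `[x - δ, x + δ]`, and lies
between them throughout. -/
structure IsBlurredJump (f : ℝ → ℝ) (p q x δ r : ℝ) : Prop where
  nonneg : 0 ≤ δ
  lt : δ < r
  integrableOn : IntegrableOn f (Ioo (x - r) (x + r))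
  eq_left : ∀ᵐ t, t ∈ Ioo (x - r) (x - δ) → f t = p
  eq_right : ∀ᵐ t, t ∈ Ioo (x + δ) (x + r) → f t = q
  between : ∀ᵐ t, t ∈ Ioo (x - r) (x + r) → |p - f t| + |q - f t| = |q - p|

/-- `u` is, up to null sets, constant on each subinterval of `(a, b)` that avoids `T`. -/
def IsConstOff (u : ℝ → ℝ) (a b : ℝ) (T : Set ℝ) : Prop :=
  ∀ c d, a ≤ c → c < d → d ≤ b → Disjoint T (Ioo c d) → ∃ z, ∀ᵐ t, t ∈ Ioo c d → u t = z

namespace IsConstOff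

variable {u : ℝ → ℝ} {a b : ℝ} {T : Set ℝ}

lemma mono {c d : ℝ} (hu : IsConstOff u a b T) (hac : a ≤ c) (hdb : d ≤ b) :
    IsConstOff u c d T :=
  fun x y hx hxy hy hT => hu x y (hac.trans hx) hxy (hy.trans hdb) hT

lemma integrableOn {T : Finset ℝ} (hu : IsConstOff u a b T) : IntegrableOn u (Ioo a b) := by
  induction T using Finset.induction_on generalizing a b with
  | empty =>
    rcases le_or_gt b a with hba | hab
    · rw [Ioo_eq_empty hba.not_gt]
      exact integrableOn_empty
    · obtain ⟨z, hz⟩ := hu a b le_rfl hab le_rfl (by simp)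
      exact (integrableOn_const (C := z) measure_Ioo_lt_top.ne).congr_fun_ae
        ((ae_restrict_iff' measurableSet_Ioo).2 (hz.mono fun t ht h => (ht h).symm))
  | insert y T _ ih =>
    have hleft : IntegrableOn u (Ioo a (min b y)) := ih fun c d hc hcd hd hT =>
      hu c d hc hcd (hd.trans (min_le_left _ _)) (by
        rw [Finset.coe_insert, disjoint_insert_left]
        exact ⟨fun hy => hy.2.not_ge (hd.trans (min_le_right _ _)), hT⟩)
    have hright : IntegrableOn u (Ioo (max a y) b) := ih fun c d hc hcd hd hT =>
      hu c d ((le_max_left _ _).trans hc) hcd hd (by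
        rw [Finset.coe_insert, disjoint_insert_left]
        exact ⟨fun hy => hy.1.not_ge ((le_max_right _ _).trans hc), hT⟩)
    have hy : IntegrableOn u {y} := IntegrableOn.of_measure_zero (measure_singleton y)
    refine ((hleft.union hright).union hy).mono_set fun t ht => ?_
    rcases lt_trichotomy t y with h | h | h
    · exact Or.inl (Or.inl ⟨ht.1, lt_min ht.2 h⟩)
    · exact Or.inr h
    · exact Or.inl (Or.inr ⟨max_lt ht.1 h, ht.2⟩)

lemma mem_of_jump (hu : IsConstOff u a b T) (hT : IsClosed T) {y p q : ℝ} (hy : y ∈ Ioo a b)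
    (hp : ∀ᵐ t, t ∈ Ioo a y → u t = p) (hq : ∀ᵐ t, t ∈ Ioo y b → u t = q) (hpq : p ≠ q) :
    y ∈ T := by
  by_contra hyT
  obtain ⟨c, d, hyI, hsub⟩ := mem_nhds_iff_exists_Ioo_subset.1
    ((hT.isOpen_compl.inter isOpen_Ioo).mem_nhds ⟨hyT, hy⟩)
  obtain ⟨hac, hdb⟩ := (Ioo_subset_Ioo_iff (hyI.1.trans hyI.2)).1 fun t ht => (hsub ht).2
  obtain ⟨z, hz⟩ := hu c d hac (hyI.1.trans hyI.2) hdb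
    (disjoint_left.2 fun t htT ht => (hsub ht).1 htT)
  obtain ⟨t, -, htp, htz⟩ := exists_mem_Ioo_of_ae hyI.1
    ((hp.and hz).mono fun t h (ht : t ∈ Ioo c y) =>
      And.intro (h.1 ⟨hac.trans_lt ht.1, ht.2⟩) (h.2 ⟨ht.1, ht.2.trans hyI.2⟩))
  obtain ⟨t', -, htq, htz'⟩ := exists_mem_Ioo_of_ae hyI.2
    ((hq.and hz).mono fun t h (ht : t ∈ Ioo y d) =>
      And.intro (h.1 ⟨ht.1, ht.2.trans_le hdb⟩) (h.2 ⟨hyI.1.trans ht.1, ht.2⟩))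
  exact hpq (htp.symm.trans (htz.trans (htz'.symm.trans htq)))

end IsConstOff

variable {f u : ℝ → ℝ} {p q x δ r γ : ℝ}

lemma integrableOn_plateauDist {S : Set ℝ} (hf : IntegrableOn f S) (hS : volume S ≠ ∞) :
    IntegrableOn (fun t => plateauDist p q (f t)) S :=
  (integrableOn_abs_const_sub hf hS p).inf (integrableOn_abs_const_sub hf hS q)

namespace IsBlurredJump

lemma plateauDist_eq_zero (hf : IsBlurredJump f p q x δ r) :
    ∀ᵐ t, t ∈ Ioo (x - r) (x + r) → t ∉ Icc (x - δ) (x + δ) → plateauDist p q (f t) = 0 := by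
  filter_upwards [hf.eq_left, hf.eq_right] with t htl htr ht htδ
  rw [mem_Icc, not_and_or, not_le, not_le] at htδ
  rcases htδ with h | h
  · simp [plateauDist, htl ⟨ht.1, h⟩]
  · simp [plateauDist, htr ⟨h, ht.2⟩]

lemma setIntegral_plateauDist_le (hf : IsBlurredJump f p q x δ r) :
    ∫ t in Ioo (x - r) (x + r), plateauDist p q (f t) ≤ δ * |q - p| := by
  have hsub : Icc (x - δ) (x + δ) ⊆ Ioo (x - r) (x + r) :=
    Icc_subset_Ioo (by linarith [hf.lt]) (by linarith [hf.lt])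
  calc ∫ t in Ioo (x - r) (x + r), plateauDist p q (f t)
      ≤ ∫ t in Ioo (x - r) (x + r), (Icc (x - δ) (x + δ)).indicator (fun _ => |q - p| / 2) t := by
        refine setIntegral_mono_on_ae
          (integrableOn_plateauDist hf.integrableOn measure_Ioo_lt_top.ne)
          (Integrable.indicator (integrableOn_const measure_Ioo_lt_top.ne) measurableSet_Icc)
          measurableSet_Ioo ?_
        filter_upwards [hf.between, hf.plateauDist_eq_zero] with t hbtw hzero ht
        by_cases htδ : t ∈ Icc (x - δ) (x + δ)
        · rw [indicator_of_mem htδ, ← hbtw ht, plateauDist]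
          linarith [min_le_left |p - f t| |q - f t|, min_le_right |p - f t| |q - f t|]
        · rw [indicator_of_notMem htδ, hzero ht htδ]
    _ = δ * |q - p| := by
        rw [setIntegral_indicator measurableSet_Icc, inter_eq_right.2 hsub, setIntegral_const,
          Real.volume_real_Icc_of_le (by linarith [hf.nonneg]), smul_eq_mul]
        ring

lemma mul_le_setIntegral_abs_sub (hf : IsBlurredJump f p q x δ r) (c : ℝ) :
    (r - δ) * |q - p| ≤ ∫ t in Ioo (x - r) (x + r), |c - f t| := by
  have hδ := hf.nonneg
  have hr := hf.lt
  have h := mul_abs_sub_le_setIntegral_abs_sub measurableSet_Ioo measurableSet_Ioo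
    (Ioo_subset_Ioo_right (by linarith)) (Ioo_subset_Ioo_left (by linarith))
    (by rw [Ioo_disjoint_Ioo]; exact (min_le_left _ _).trans
          (le_max_of_le_right (by linarith)))
    measure_Ioo_lt_top.ne hf.integrableOn hf.eq_left hf.eq_right c
  rwa [Real.volume_real_Ioo_of_le (by linarith), Real.volume_real_Ioo_of_le (by linarith),
    show x - δ - (x - r) = r - δ by ring, show x + r - (x + δ) = r - δ by ring, min_self] at h

lemma exists_add_mul_le_setIntegral_abs_sub (hf : IsBlurredJump f p q x δ r) {v : ℝ} {P S : Set ℝ}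
    (hSm : MeasurableSet S) (hPm : MeasurableSet P) (hPS : P ⊆ S)
    (hS : S ⊆ Ioo (x - r) (x + r)) (hP : ∀ᵐ t, t ∈ P → f t = v)
    (hv : ∀ z, plateauDist p q z ≤ |v - z|)
    (hlt : volume.real (S ∩ Icc (x - δ) (x + δ)) < volume.real P) (c : ℝ) :
    ∃ w > 0, (∫ t in S, plateauDist p q (f t)) + |c - v| * w ≤ ∫ t in S, |c - f t| := by
  have hfin : volume S ≠ ∞ := measure_ne_top_of_subset hS measure_Ioo_lt_top.ne
  have hint := hf.integrableOn.mono_set hS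
  exact ⟨_, sub_pos.2 hlt, setIntegral_add_mul_le_setIntegral_abs_sub hSm hPm
    (hSm.inter measurableSet_Icc) hPS inter_subset_left hfin hint
    (integrableOn_plateauDist hint hfin) hP (Eventually.of_forall fun t _ => hv (f t))
    (hf.plateauDist_eq_zero.mono fun t h ht htM => (h (hS ht) fun h' => htM ⟨ht, h'⟩).le) c⟩

lemma volume_real_inter_transition_le (hf : IsBlurredJump f p q x δ r) (S : Set ℝ) :
    volume.real (S ∩ Icc (x - δ) (x + δ)) ≤ 2 * δ := by
  refine (measureReal_mono inter_subset_right measure_Icc_lt_top.ne).trans_eq ?_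
  rw [Real.volume_real_Icc_of_le (by linarith [hf.nonneg])]
  ring

/- To the left of a jump of `u` at `y`, the plateau where `f = p` is longer than the part of the
transition zone where a constant other than `p` could be the better approximation. -/
lemma exists_add_mul_le_setIntegral_left (hf : IsBlurredJump f p q x δ r) (hr : 3 * δ < r) {y : ℝ}
    (hy : y ∈ Ioo (x - r) (x + r)) (c : ℝ) :
    ∃ w > 0, (∫ t in Ioo (x - r) y, plateauDist p q (f t)) + |c - p| * w ≤
      ∫ t in Ioo (x - r) y, |c - f t| := by
  refine hf.exists_add_mul_le_setIntegral_abs_sub (P := Ioo (x - r) (min y (x - δ)))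
    measurableSet_Ioo measurableSet_Ioo (Ioo_subset_Ioo_right (min_le_left _ _))
    (Ioo_subset_Ioo_right hy.2.le)
    (hf.eq_left.mono fun t h ht => h ⟨ht.1, ht.2.trans_le (min_le_right _ _)⟩)
    (fun _ => min_le_left _ _) ?_ c
  rw [Real.volume_real_Ioo_of_le (le_min hy.1.le (by linarith [hf.lt]))]
  rcases le_or_gt y (x - δ) with hyx | hyx
  · have hempty : Ioo (x - r) y ∩ Icc (x - δ) (x + δ) = ∅ :=
      eq_empty_of_forall_notMem fun t ht => by linarith [ht.1.2, ht.2.1]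
    rw [hempty, measureReal_empty, min_eq_left hyx]
    linarith [hy.1]
  · rw [min_eq_right hyx.le]
    linarith [hf.volume_real_inter_transition_le (Ioo (x - r) y)]

lemma exists_add_mul_le_setIntegral_right (hf : IsBlurredJump f p q x δ r) (hr : 3 * δ < r) {y : ℝ}
    (hy : y ∈ Ioo (x - r) (x + r)) (c : ℝ) :
    ∃ w > 0, (∫ t in Ioo y (x + r), plateauDist p q (f t)) + |c - q| * w ≤
      ∫ t in Ioo y (x + r), |c - f t| := by
  refine hf.exists_add_mul_le_setIntegral_abs_sub (P := Ioo (max y (x + δ)) (x + r))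
    measurableSet_Ioo measurableSet_Ioo (Ioo_subset_Ioo_left (le_max_left _ _))
    (Ioo_subset_Ioo_left hy.1.le)
    (hf.eq_right.mono fun t h ht => h ⟨(le_max_right _ _).trans_lt ht.1, ht.2⟩)
    (fun _ => min_le_right _ _) ?_ c
  rw [Real.volume_real_Ioo_of_le (max_le hy.2.le (by linarith [hf.lt]))]
  rcases le_or_gt (x + δ) y with hyx | hyx
  · have hempty : Ioo y (x + r) ∩ Icc (x - δ) (x + δ) = ∅ :=
      eq_empty_of_forall_notMem fun t ht => by linarith [ht.1.1, ht.2.2]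
    rw [hempty, measureReal_empty, max_eq_left hyx]
    linarith [hy.2]
  · rw [max_eq_right hyx.le]
    linarith [hf.volume_real_inter_transition_le (Ioo y (x + r))]

lemma setIntegral_abs_sub_eq (hf : IsBlurredJump f p q x δ r) {y c d : ℝ}
    (hy : y ∈ Ioo (x - r) (x + r)) (hc : ∀ᵐ t, t ∈ Ioo (x - r) y → u t = c)
    (hd : ∀ᵐ t, t ∈ Ioo y (x + r) → u t = d)
    (hu : IntegrableOn u (Ioo (x - r) (x + r))) :
    ∫ t in Ioo (x - r) (x + r), |u t - f t| =
      (∫ t in Ioo (x - r) y, |c - f t|) + ∫ t in Ioo y (x + r), |d - f t| := by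
  have hint : IntegrableOn (fun t => |u t - f t|) (Ioo (x - r) (x + r)) :=
    (hu.sub hf.integrableOn).abs
  rw [setIntegral_Ioo_split hy.1.le hy.2.le hint,
    setIntegral_abs_sub_eq_of_ae_eq measurableSet_Ioo hc,
    setIntegral_abs_sub_eq_of_ae_eq measurableSet_Ioo hd]

lemma setIntegral_plateauDist_le_of_jump (hf : IsBlurredJump f p q x δ r) (hr : 3 * δ < r)
    {y : ℝ} (hy : y ∈ Ioo (x - r) (x + r)) (c d : ℝ) :
    ∫ t in Ioo (x - r) (x + r), plateauDist p q (f t) ≤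
        (∫ t in Ioo (x - r) y, |c - f t|) + ∫ t in Ioo y (x + r), |d - f t| ∧
      ((∫ t in Ioo (x - r) y, |c - f t|) + ∫ t in Ioo y (x + r), |d - f t| ≤
        ∫ t in Ioo (x - r) (x + r), plateauDist p q (f t) → c = p ∧ d = q) := by
  obtain ⟨w, hw, hl⟩ := hf.exists_add_mul_le_setIntegral_left hr hy c
  obtain ⟨w', hw', hr⟩ := hf.exists_add_mul_le_setIntegral_right hr hy d
  rw [setIntegral_Ioo_split hy.1.le hy.2.le
    (integrableOn_plateauDist hf.integrableOn measure_Ioo_lt_top.ne)]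
  have hcw := mul_nonneg (abs_nonneg (c - p)) hw.le
  have hdw := mul_nonneg (abs_nonneg (d - q)) hw'.le
  refine ⟨by linarith, fun hle => ⟨?_, ?_⟩⟩ <;> by_contra hne
  · linarith [mul_pos (abs_sub_pos.2 hne) hw]
  · linarith [mul_pos (abs_sub_pos.2 hne) hw']

lemma pos_of_lt (hf : IsBlurredJump f p q x δ r) (hγ : δ * |q - p| < γ) : 0 < γ :=
  (mul_nonneg hf.nonneg (abs_nonneg _)).trans_lt hγ

lemma three_mul_lt (hγ : δ * |q - p| < γ) (hγ' : γ + δ * |q - p| < (r - δ) * |q - p|) :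
    3 * δ < r := by
  have h : (2 * δ) * |q - p| < (r - δ) * |q - p| := by linarith
  linarith [lt_of_mul_lt_mul_right h (abs_nonneg _)]

lemma lt_energy_or_exists_jump (hf : IsBlurredJump f p q x δ r) (hγ : δ * |q - p| < γ)
    (hγ' : γ + δ * |q - p| < (r - δ) * |q - p|) {T : Finset ℝ}
    (hT : IsConstOff u (x - r) (x + r) T) :
    γ + ∫ t in Ioo (x - r) (x + r), plateauDist p q (f t) <
        γ * (T.filter (· ∈ Ioo (x - r) (x + r))).card +
          ∫ t in Ioo (x - r) (x + r), |u t - f t| ∨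
      (T.filter (· ∈ Ioo (x - r) (x + r))).card = 1 ∧ ∃ y ∈ Ioo (x - r) (x + r), ∃ c d,
        (∀ᵐ t, t ∈ Ioo (x - r) y → u t = c) ∧ ∀ᵐ t, t ∈ Ioo y (x + r) → u t = d := by
  have hr : x - r < x + r := by linarith [hf.nonneg, hf.lt]
  have hE := hf.setIntegral_plateauDist_le
  obtain h0 | h1 | h2 : (T.filter (· ∈ Ioo (x - r) (x + r))).card = 0 ∨
      (T.filter (· ∈ Ioo (x - r) (x + r))).card = 1 ∨
      2 ≤ (T.filter (· ∈ Ioo (x - r) (x + r))).card := by omega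
  · left
    rw [Finset.card_eq_zero, Finset.filter_eq_empty_iff] at h0
    obtain ⟨c, hc⟩ := hT _ _ le_rfl hr le_rfl (disjoint_left.2 fun _ ht => h0 ht)
    rw [setIntegral_abs_sub_eq_of_ae_eq measurableSet_Ioo hc,
      Finset.filter_false_of_mem h0, Finset.card_empty, Nat.cast_zero, mul_zero, zero_add]
    linarith [hf.mul_le_setIntegral_abs_sub c]
  · right
    obtain ⟨y, hy⟩ := Finset.card_eq_one.1 h1
    have hyT : y ∈ T ∧ y ∈ Ioo (x - r) (x + r) :=
      Finset.mem_filter.1 (hy ▸ Finset.mem_singleton_self y)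
    have huniq : ∀ z ∈ T, z ∈ Ioo (x - r) (x + r) → z = y := fun z hz hzI =>
      Finset.mem_singleton.1 (hy ▸ Finset.mem_filter.2 ⟨hz, hzI⟩)
    obtain ⟨c, hc⟩ := hT (x - r) y le_rfl hyT.2.1 hyT.2.2.le (disjoint_left.2 fun z hz hzI =>
      hzI.2.ne (huniq z hz ⟨hzI.1, hzI.2.trans hyT.2.2⟩))
    obtain ⟨d, hd⟩ := hT y (x + r) hyT.2.1.le hyT.2.2 le_rfl (disjoint_left.2 fun z hz hzI =>
      hzI.1.ne' (huniq z hz ⟨hyT.2.1.trans hzI.1, hzI.2⟩))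
    exact ⟨h1, y, hyT.2, c, d, hc, hd⟩
  · left
    have hcard : γ * 2 ≤ γ * (T.filter (· ∈ Ioo (x - r) (x + r))).card :=
      mul_le_mul_of_nonneg_left (by exact_mod_cast h2) (hf.pos_of_lt hγ).le
    have : 0 ≤ ∫ t in Ioo (x - r) (x + r), |u t - f t| := integral_nonneg fun _ => abs_nonneg _
    linarith

lemma le_energy (hf : IsBlurredJump f p q x δ r) (hγ : δ * |q - p| < γ)
    (hγ' : γ + δ * |q - p| < (r - δ) * |q - p|) (hu : IntegrableOn u (Ioo (x - r) (x + r)))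
    {T : Finset ℝ} (hT : IsConstOff u (x - r) (x + r) T) :
    γ + ∫ t in Ioo (x - r) (x + r), plateauDist p q (f t) ≤
      γ * (T.filter (· ∈ Ioo (x - r) (x + r))).card +
        ∫ t in Ioo (x - r) (x + r), |u t - f t| := by
  rcases hf.lt_energy_or_exists_jump hγ hγ' hT with hlt | ⟨hcard, y, hy, c, d, hc, hd⟩
  · exact hlt.le
  · rw [hcard, hf.setIntegral_abs_sub_eq hy hc hd hu, Nat.cast_one, mul_one]
    exact add_le_add_right (hf.setIntegral_plateauDist_le_of_jump (three_mul_lt hγ hγ') hy c d).1 γ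

lemma exists_jump_of_energy_le (hf : IsBlurredJump f p q x δ r) (hγ : δ * |q - p| < γ)
    (hγ' : γ + δ * |q - p| < (r - δ) * |q - p|) (hu : IntegrableOn u (Ioo (x - r) (x + r)))
    {T : Finset ℝ} (hT : IsConstOff u (x - r) (x + r) T)
    (hle : γ * (T.filter (· ∈ Ioo (x - r) (x + r))).card +
        ∫ t in Ioo (x - r) (x + r), |u t - f t| ≤
      γ + ∫ t in Ioo (x - r) (x + r), plateauDist p q (f t)) :
    ∃ y ∈ Ioo (x - r) (x + r), (∀ᵐ t, t ∈ Ioo (x - r) y → u t = p) ∧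
      (∀ᵐ t, t ∈ Ioo y (x + r) → u t = q) ∧
      ∀ᵐ t, t ∈ Ioo (x - r) (x + r) → |u t - f t| = plateauDist p q (f t) := by
  rcases hf.lt_energy_or_exists_jump hγ hγ' hT with hlt | ⟨hcard, y, hy, c, d, hc, hd⟩
  · exact absurd hle hlt.not_ge
  have hopt := hf.setIntegral_plateauDist_le_of_jump (three_mul_lt hγ hγ') hy c d
  have heq := hf.setIntegral_abs_sub_eq hy hc hd hu
  rw [hcard, heq, Nat.cast_one, mul_one, add_le_add_iff_left] at hle
  obtain ⟨rfl, rfl⟩ := hopt.2 hle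
  refine ⟨y, hy, hc, hd, ?_⟩
  have hpd : ∀ᵐ t, t ∈ Ioo (x - r) (x + r) → plateauDist c d (f t) ≤ |u t - f t| :=
    ae_mem_Ioo_of_ae_split (hc.mono fun t ht h => by rw [ht h]; exact min_le_left _ _)
      (hd.mono fun t ht h => by rw [ht h]; exact min_le_right _ _)
  have hae := (integral_eq_iff_of_ae_le (integrableOn_plateauDist hf.integrableOn
    measure_Ioo_lt_top.ne) (hu.sub hf.integrableOn).abs
    ((ae_restrict_iff' measurableSet_Ioo).2 hpd)).1 ((hopt.1.antisymm hle).trans heq.symm)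
  exact ((ae_restrict_iff' measurableSet_Ioo).1 hae).mono fun t ht htI => (ht htI).symm

end IsBlurredJump
end Window

section SymmCdf

/-- `G` has the properties of the distribution function of a symmetric probability measure that
are needed to tell the sign of `x` from `G x`: it increases from `0` to `1`, and `0` is its only
median. -/
structure IsSymmCdf (G : ℝ → ℝ) : Prop where
  monotone : Monotone G
  nonneg : ∀ x, 0 ≤ G x
  neg : ∀ x, G (-x) = 1 - G x
  half_lt : ∀ x, 0 < x → 1 / 2 < G x

/-- The average of `G` over the interval of radius `h` around `x`. -/
def movingAverage (G : ℝ → ℝ) (h x : ℝ) : ℝ := (2 * h)⁻¹ * ∫ y in -h..h, G (x + y)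

variable {G : ℝ → ℝ} {p q x w : ℝ}

namespace IsSymmCdf

lemma le_one (hG : IsSymmCdf G) (x : ℝ) : G x ≤ 1 := by
  linarith [hG.neg x, hG.nonneg (-x)]

lemma half_le_iff (hG : IsSymmCdf G) : 1 / 2 ≤ G x ↔ 0 ≤ x := by
  refine ⟨fun h => ?_, fun h => ?_⟩
  · by_contra! hx
    linarith [hG.half_lt (-x) (neg_pos.2 hx), hG.neg x]
  · linarith [hG.monotone (neg_nonpos.2 h |>.trans h), hG.neg x]

lemma le_half_iff (hG : IsSymmCdf G) : G x ≤ 1 / 2 ↔ x ≤ 0 := by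
  have h := hG.half_le_iff (x := -x)
  rw [hG.neg, neg_nonneg] at h
  rw [← h, le_sub_comm]
  norm_num

lemma movingAverage (hG : IsSymmCdf G) (hc : Continuous G) {h : ℝ} (hh : 0 < h) :
    IsSymmCdf (movingAverage G h) := by
  have hcont : ∀ x, Continuous fun y => G (x + y) := fun x => hc.comp (continuous_const_add x)
  have hint : ∀ x, IntervalIntegrable (fun y => G (x + y)) volume (-h) h := fun x =>
    (hcont x).intervalIntegrable _ _
  have hle : -h ≤ h := by linarith
  have hneg : ∀ x, ∫ y in -h..h, G (-x + y) = 2 * h - ∫ y in -h..h, G (x + y) := fun x => by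
    calc ∫ y in -h..h, G (-x + y) = ∫ y in -h..h, (1 - G (x + -y)) := by
          simp only [← hG.neg, neg_add, neg_neg]
      _ = ∫ y in -h..h, (1 - G (x + y)) := by
          rw [intervalIntegral.integral_comp_neg fun y => 1 - G (x + y), neg_neg]
      _ = 2 * h - ∫ y in -h..h, G (x + y) := by
          rw [intervalIntegral.integral_sub intervalIntegrable_const (hint x),
            intervalIntegral.integral_const, smul_eq_mul]
          ring
  refine ⟨fun x x' hxx' => ?_, fun x => ?_, fun x => ?_, fun x hx => ?_⟩
  · exact mul_le_mul_of_nonneg_left (intervalIntegral.integral_mono_on hle (hint x) (hint x')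
      fun y _ => hG.monotone (add_le_add_left hxx' y)) (by positivity)
  · exact mul_nonneg (by positivity) (intervalIntegral.integral_nonneg hle fun y _ => hG.nonneg _)
  · rw [_root_.movingAverage, hneg, _root_.movingAverage]
    field_simp
  · have hlt : ∫ y in -h..h, G (-x + y) < ∫ y in -h..h, G (x + y) :=
      intervalIntegral.integral_lt_integral_of_continuousOn_of_le_of_exists_lt (by linarith)
        (hcont _).continuousOn (hcont _).continuousOn (fun y _ => hG.monotone (by linarith))
        ⟨0, ⟨by linarith, hh.le⟩, by
          rw [add_zero, add_zero, hG.neg]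
          linarith [hG.half_lt x hx]⟩
    rw [hneg] at hlt
    rw [_root_.movingAverage, lt_inv_mul_iff₀ (by positivity)]
    linarith

end IsSymmCdf

lemma abs_left_sub_interpolation (hw : 0 ≤ w) : |p - (p + (q - p) * w)| = |q - p| * w := by
  rw [sub_add_cancel_left, abs_neg, abs_mul, abs_of_nonneg hw]

lemma abs_right_sub_interpolation (hw : w ≤ 1) :
    |q - (p + (q - p) * w)| = |q - p| * (1 - w) := by
  rw [show q - (p + (q - p) * w) = (q - p) * (1 - w) by ring, abs_mul,
    abs_of_nonneg (sub_nonneg.2 hw)]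

end SymmCdf

section Sample

/-- `z` is a sample of `F` on the interval `(a, b)`: its mean value or its value at the midpoint. -/
def IsSample (F : ℝ → ℝ) (a b z : ℝ) : Prop :=
  z = (b - a)⁻¹ * ∫ s in Ioo a b, F s ∨ z = F ((a + b) / 2)

variable {F G : ℝ → ℝ} {a b p q x z : ℝ}

lemma IsSample.eq_const (hz : IsSample F a b z) (hab : a < b) (hF : ∀ y ∈ Ioo a b, F y = p) :
    z = p := by
  have hab' : b - a ≠ 0 := (sub_pos.2 hab).ne'
  rcases hz with rfl | rfl
  · rw [setIntegral_congr_fun measurableSet_Ioo hF, setIntegral_const,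
      Real.volume_real_Ioo_of_le hab.le, smul_eq_mul, inv_mul_cancel_left₀ hab']
  · exact hF _ ⟨by linarith, by linarith⟩

/- The mean value of a shifted distribution function on `(a, b)` is the midpoint value of its
moving average, so both kinds of sampling reduce to evaluating a distribution function. -/
lemma IsSample.exists_isSymmCdf (hz : IsSample F a b z) (hab : a < b) (hG : IsSymmCdf G)
    (hc : Continuous G) (hF : ∀ y ∈ Ioo a b, F y = p + (q - p) * G (y - x)) :
    ∃ H, IsSymmCdf H ∧ z = p + (q - p) * H ((a + b) / 2 - x) := by
  rcases hz with rfl | rfl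
  · refine ⟨movingAverage G ((b - a) / 2), hG.movingAverage hc (by linarith), ?_⟩
    have hint : IntervalIntegrable (fun y => G (y - x)) volume a b :=
      (hc.comp (continuous_sub_right x)).intervalIntegrable _ _
    have hshift : ∫ y in -((b - a) / 2)..(b - a) / 2, G ((a + b) / 2 - x + y) =
        ∫ y in a..b, G (y - x) := by
      rw [intervalIntegral.integral_comp_add_left G, intervalIntegral.integral_comp_sub_right G]
      congr 1 <;> ring
    rw [setIntegral_congr_fun measurableSet_Ioo hF, ← integral_Ioc_eq_integral_Ioo,
      ← intervalIntegral.integral_of_le hab.le,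
      intervalIntegral.integral_add intervalIntegrable_const (hint.const_mul _),
      intervalIntegral.integral_const_mul, intervalIntegral.integral_const, movingAverage, hshift,
      smul_eq_mul]
    have : b - a ≠ 0 := (sub_pos.2 hab).ne'
    field_simp
  · exact ⟨G, hG, hF _ ⟨by linarith, by linarith⟩⟩

end Sample

section Kernel

/-- `K` is a smoothing kernel: a symmetric probability density that is supported in `[-κ, κ]` and
positive near `0`. -/
structure IsSymmKernel (K : ℝ → ℝ) (κ : ℝ) : Prop where
  integrable : Integrable K
  nonneg : ∀ x, 0 ≤ K x
  symm : ∀ x, K (-x) = K x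
  integral_eq_one : ∫ x, K x = 1
  support_subset : Function.support K ⊆ Icc (-κ) κ
  pos_near_zero : ∃ ε > 0, ∀ x : ℝ, |x| < ε → 0 < K x

/-- The distribution function of the density `K`. -/
def kernelCdf (K : ℝ → ℝ) (y : ℝ) : ℝ := ∫ s in Iic y, K s

variable {K g : ℝ → ℝ} {κ c j p q y : ℝ}

lemma kernelCdf_sub (hK : Integrable K) (x y : ℝ) :
    kernelCdf K y - kernelCdf K x = ∫ s in x..y, K s :=
  intervalIntegral.integral_Iic_sub_Iic hK.integrableOn hK.integrableOn

lemma continuous_kernelCdf (hK : Integrable K) : Continuous (kernelCdf K) := by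
  have h : kernelCdf K = fun y => kernelCdf K 0 + ∫ s in (0 : ℝ)..y, K s := by
    funext y
    rw [← kernelCdf_sub hK, add_sub_cancel]
  rw [h]
  exact continuous_const.add (hK.continuous_primitive 0)

namespace IsSymmKernel

lemma pos (hK : IsSymmKernel K κ) : 0 < κ := by
  obtain ⟨ε, hε, hKε⟩ := hK.pos_near_zero
  have hmem : ε / 2 ∈ Icc (-κ) κ := hK.support_subset (hKε _ (by
    rw [abs_of_pos (half_pos hε)]
    exact half_lt_self hε)).ne'
  exact (half_pos hε).trans_le hmem.2

lemma kernelCdf_neg (hK : IsSymmKernel K κ) (y : ℝ) : kernelCdf K (-y) = 1 - kernelCdf K y := by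
  have hreflect : kernelCdf K (-y) = ∫ s in Ioi y, K s := by
    have h := integral_comp_neg_Iic (-y) K
    simp only [hK.symm, neg_neg] at h
    exact h
  rw [hreflect, ← hK.integral_eq_one, ← intervalIntegral.integral_Iic_add_Ioi (b := y)
    hK.integrable.integrableOn hK.integrable.integrableOn, kernelCdf, add_sub_cancel_left]

lemma isSymmCdf_kernelCdf (hK : IsSymmKernel K κ) : IsSymmCdf (kernelCdf K) := by
  have hmono : Monotone (kernelCdf K) := fun x y hxy => by
    rw [← sub_nonneg, kernelCdf_sub hK.integrable]
    exact intervalIntegral.integral_nonneg hxy fun u _ => hK.nonneg u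
  refine ⟨hmono, fun _ => integral_nonneg fun _ => hK.nonneg _, hK.kernelCdf_neg, fun y hy => ?_⟩
  obtain ⟨ε, hε, hKε⟩ := hK.pos_near_zero
  have hpos : 0 < ∫ s in (0 : ℝ)..min y ε, K s :=
    intervalIntegral.intervalIntegral_pos_of_pos_on hK.integrable.intervalIntegrable
      (fun x hx => hKε x (by rw [abs_of_pos hx.1]; exact hx.2.trans_le (min_le_right _ _)))
      (lt_min hy hε)
  rw [← kernelCdf_sub hK.integrable] at hpos
  have hzero := hK.kernelCdf_neg 0
  rw [neg_zero] at hzero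
  linarith [hmono (min_le_left y ε)]

lemma convK_eq_const (hK : IsSymmKernel K κ) (hg : ∀ x, |y - x| ≤ κ → g x = c) :
    convK K g y = c := by
  have h : (fun s => K s * g (y - s)) = fun s => K s * c := by
    funext s
    by_cases hs : K s = 0
    · rw [hs, zero_mul, zero_mul]
    · rw [hg (y - s)]
      rw [sub_sub_cancel, abs_le]
      exact hK.support_subset (Function.mem_support.2 hs)
  rw [convK, h, integral_mul_const, hK.integral_eq_one, one_mul]

lemma convK_eq_kernelCdf (hK : IsSymmKernel K κ)
    (hg : ∀ x, |y - x| ≤ κ → g x = if j < x then q else p) :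
    convK K g y = p + (q - p) * kernelCdf K (y - j) := by
  have h : (fun s => K s * g (y - s)) =
      fun s => K s * p + (q - p) * (Iio (y - j)).indicator K s := by
    funext s
    by_cases hs : K s = 0
    · simp only [hs, indicator_apply, ite_self, zero_mul, mul_zero, add_zero]
    have hsκ : |y - (y - s)| ≤ κ := by
      rw [sub_sub_cancel, abs_le]
      exact hK.support_subset (Function.mem_support.2 hs)
    simp only [hg _ hsκ, indicator_apply, mem_Iio, lt_sub_comm (a := j)]
    split_ifs <;> ring
  rw [convK, h, integral_add (hK.integrable.mul_const _)
    ((hK.integrable.indicator measurableSet_Iio).const_mul _), integral_mul_const,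
    hK.integral_eq_one, one_mul, integral_const_mul, integral_indicator measurableSet_Iio,
    kernelCdf, integral_Iic_eq_integral_Iio]

end IsSymmKernel

end Kernel

section Cell

/-- `(a, b)` is a cell of the discretization set `X`: its endpoints are consecutive points
of `X`. -/
structure IsCell (X : Finset ℝ) (a b : ℝ) : Prop where
  left_mem : a ∈ X
  right_mem : b ∈ X
  lt : a < b
  le_or_le : ∀ c ∈ X, c ≤ a ∨ b ≤ c

/-- `X` discretizes `[0, 1]` with mesh size at most `η`. -/
structure IsMesh (X : Finset ℝ) (η : ℝ) : Prop where
  zero_mem : 0 ∈ X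
  one_mem : 1 ∈ X
  sub_le : ∀ a b, IsCell X a b → b - a ≤ η

/-- `s` is a nearest neighbour of `y` in `X`. -/
def IsNearest (X : Finset ℝ) (y s : ℝ) : Prop :=
  s ∈ X ∧ ∀ p ∈ X, |y - s| ≤ |y - p|

variable {X : Finset ℝ} {a b c d s t x y η : ℝ}

lemma exists_isCell_left (hx : x ∈ X) (hc : c ∈ X) (hcx : c < x) : ∃ a, c ≤ a ∧ IsCell X a x := by
  have hmax := (X.filter (· < x)).isGreatest_max' ⟨c, Finset.mem_filter.2 ⟨hc, hcx⟩⟩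
  have hmem := Finset.mem_filter.1 (Finset.mem_coe.1 hmax.1)
  refine ⟨_, hmax.2 (by simp [hc, hcx]), hmem.1, hx, hmem.2, fun d hd => ?_⟩
  rcases lt_or_ge d x with h | h
  · exact Or.inl (hmax.2 (by simp [hd, h]))
  · exact Or.inr h

lemma exists_isCell_of_notMem (hc : c ∈ X) (hd : d ∈ X) (ht : t ∈ Icc c d) (htX : t ∉ X) :
    ∃ a b, IsCell X a b ∧ t ∈ Ioo a b := by
  have hct : c < t := lt_of_le_of_ne ht.1 fun h => htX (h ▸ hc)
  have hmin := (X.filter (t < ·)).isLeast_min' ⟨d, Finset.mem_filter.2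
    ⟨hd, lt_of_le_of_ne ht.2 fun h => htX (h ▸ hd)⟩⟩
  have hmem := Finset.mem_filter.1 (Finset.mem_coe.1 hmin.1)
  obtain ⟨a, -, ha⟩ := exists_isCell_left hmem.1 hc (hct.trans hmem.2)
  refine ⟨a, _, ha, lt_of_not_ge fun hta => ?_, hmem.2⟩
  have hta : t < a := lt_of_le_of_ne hta fun h => htX (h ▸ ha.left_mem)
  exact ha.lt.not_ge (hmin.2 (by simp [ha.left_mem, hta]))

lemma exists_isCell_right (hx : x ∈ X) (hc : c ∈ X) (hxc : x < c) : ∃ b, b ≤ c ∧ IsCell X x b := by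
  have hmin := (X.filter (x < ·)).isLeast_min' ⟨c, Finset.mem_filter.2 ⟨hc, hxc⟩⟩
  have hmem := Finset.mem_filter.1 (Finset.mem_coe.1 hmin.1)
  refine ⟨_, hmin.2 (by simp [hc, hxc]), hx, hmem.1, hmem.2, fun d hd => ?_⟩
  rcases le_or_gt d x with h | h
  · exact Or.inl h
  · exact Or.inr (hmin.2 (by simp [hd, h]))

lemma abs_sub_left_le_iff (hab : a < b) : |y - a| ≤ |y - b| ↔ 2 * y ≤ a + b := by
  rw [← sq_le_sq, ← sub_nonneg,
    show (y - b) ^ 2 - (y - a) ^ 2 = (b - a) * (a + b - 2 * y) by ring,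
    mul_nonneg_iff_of_pos_left (sub_pos.2 hab), sub_nonneg]

lemma abs_sub_right_le_iff (hab : a < b) : |y - b| ≤ |y - a| ↔ a + b ≤ 2 * y := by
  rw [← sq_le_sq, ← sub_nonneg,
    show (y - a) ^ 2 - (y - b) ^ 2 = (b - a) * (2 * y - (a + b)) by ring,
    mul_nonneg_iff_of_pos_left (sub_pos.2 hab), sub_nonneg]

lemma IsCell.disjoint (h : IsCell X a b) : Disjoint (X : Set ℝ) (Ioo a b) :=
  disjoint_left.2 fun c hc hcI =>
    (h.le_or_le c hc).elim (fun hca => hca.not_gt hcI.1) fun hbc => hbc.not_gt hcI.2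

namespace IsMesh

lemma pos (hX : IsMesh X η) : 0 < η := by
  obtain ⟨b, -, hb⟩ := exists_isCell_right hX.zero_mem hX.one_mem one_pos
  exact (sub_pos.2 hb.lt).trans_le (hX.sub_le _ _ hb)

lemma mono (hX : IsMesh X η) {ε : ℝ} (h : η ≤ ε) : IsMesh X ε :=
  ⟨hX.zero_mem, hX.one_mem, fun a b hab => (hX.sub_le a b hab).trans h⟩

lemma exists_isCell (hX : IsMesh X η) (ht : t ∈ Icc (0 : ℝ) 1) (htX : t ∉ X) :
    ∃ a b, IsCell X a b ∧ t ∈ Ioo a b ∧ b - a ≤ η := by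
  obtain ⟨a, b, hab, htab⟩ := exists_isCell_of_notMem hX.zero_mem hX.one_mem ht htX
  exact ⟨a, b, hab, htab, hX.sub_le a b hab⟩

end IsMesh

namespace IsNearest

lemma two_mul_le (hs : IsNearest X y s) (hab : IsCell X a b) (hsa : s ≤ a) : 2 * y ≤ a + b := by
  linarith [(abs_sub_left_le_iff (hsa.trans_lt hab.lt)).1 (hs.2 b hab.right_mem)]

lemma le_two_mul (hs : IsNearest X y s) (hab : IsCell X a b) (hbs : b ≤ s) : a + b ≤ 2 * y := by
  linarith [(abs_sub_right_le_iff (hab.lt.trans_le hbs)).1 (hs.2 a hab.left_mem)]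

lemma abs_sub_le (hs : IsNearest X y s) (hX : IsMesh X η) (hy : y ∈ Icc (0 : ℝ) 1) :
    |y - s| ≤ η := by
  by_cases hyX : y ∈ X
  · exact (hs.2 y hyX).trans (by rw [sub_self, abs_zero]; exact hX.pos.le)
  · obtain ⟨a, b, hab, hyab, hη⟩ := hX.exists_isCell hy hyX
    refine (hs.2 a hab.left_mem).trans ?_
    rw [abs_of_pos (sub_pos.2 hyab.1)]
    linarith [hyab.2]

end IsNearest

lemma isNearest_of_forall_isCell (hx : x ∈ X) (hl : ∀ a, IsCell X a x → a + x ≤ 2 * y)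
    (hr : ∀ b, IsCell X x b → 2 * y ≤ x + b) : IsNearest X y x := by
  refine ⟨hx, fun p hp => ?_⟩
  rcases lt_trichotomy p x with hpx | rfl | hxp
  · obtain ⟨a, hpa, ha⟩ := exists_isCell_left hx hp hpx
    exact (abs_sub_right_le_iff hpx).2 (by linarith [hl a ha])
  · exact le_rfl
  · obtain ⟨b, hbp, hb⟩ := exists_isCell_right hx hp hxp
    exact (abs_sub_left_le_iff hxp).2 (by linarith [hr b hb])

end Cell

section StepFunction

lemma ae_mu01_iff {Q : ℝ → Prop} : (∀ᵐ t ∂mu01, Q t) ↔ ∀ᵐ t, t ∈ Icc (0 : ℝ) 1 → Q t :=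
  ae_restrict_iff' measurableSet_Icc

lemma ae_notMem_finset (T : Finset ℝ) : ∀ᵐ t : ℝ, t ∉ T :=
  compl_mem_ae_iff.2 (T.measure_zero volume)

lemma exists_castSucc_le_and_lt_succ {m : ℕ} {x : Fin (m + 1) → ℝ} {c : ℝ} (h0 : x 0 ≤ c)
    (h1 : c < x (Fin.last m)) : ∃ l : Fin m, x l.castSucc ≤ c ∧ c < x l.succ := by
  by_contra! h
  exact absurd (Fin.induction (motive := fun i => x i ≤ c) h0 h (Fin.last m)) h1.not_ge

lemma stepF_eq {m : ℕ} {x : Fin (m + 1) → ℝ} (hx : StrictMono x) (a : Fin m → ℝ) {l : Fin m}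
    {t : ℝ} (ht : t ∈ Ioo (x l.castSucc) (x l.succ)) : stepF x a t = a l := by
  rw [stepF, Finset.sum_eq_single_of_mem l (Finset.mem_univ l) fun k _ hk => ?_,
    indicator_of_mem ht]
  refine indicator_of_notMem (fun hkt => ?_) _
  rcases lt_or_gt_of_ne hk with h | h
  · linarith [hx.monotone (Fin.succ_le_castSucc_iff.2 h), ht.1, hkt.2]
  · linarith [hx.monotone (Fin.succ_le_castSucc_iff.2 h), ht.2, hkt.1]

lemma IsPCRep.isConstOff {u : ℝ → ℝ} {m : ℕ} {x : Fin (m + 1) → ℝ} {a : Fin m → ℝ}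
    (h : IsPCRep u x a) {T : Set ℝ} (hT : ∀ i, i ≠ 0 → i ≠ Fin.last m → x i ∈ T) :
    IsConstOff u 0 1 T := by
  obtain ⟨hx, h0, h1, hu⟩ := h
  intro c d hc hcd hd hdisj
  obtain ⟨l, hlc, hcl⟩ := exists_castSucc_le_and_lt_succ (x := x) (c := c) (h0.trans_le hc)
    (h1 ▸ hcd.trans_le hd)
  have hdl : d ≤ x l.succ := by
    by_cases hlast : l.succ = Fin.last m
    · rwa [hlast, h1]
    · by_contra! hlt
      exact disjoint_left.1 hdisj (hT _ (Fin.succ_ne_zero l) hlast) ⟨hcl, hlt⟩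
  refine ⟨a l, (ae_mu01_iff.1 hu).mono fun t ht htm => ?_⟩
  rw [ht ⟨hc.trans htm.1.le, htm.2.le.trans hd⟩]
  exact stepF_eq hx a ⟨hlc.trans_lt htm.1, htm.2.trans_le hdl⟩

lemma IsConstOff.integrableOn_Icc {u : ℝ → ℝ} {a b : ℝ} {T : Finset ℝ}
    (hu : IsConstOff u a b T) : IntegrableOn u (Icc a b) :=
  (integrableOn_Icc_iff_integrableOn_Ioo (by simp) (by simp)).2 hu.integrableOn

lemma IsPCIn.isConstOff {u : ℝ → ℝ} {S : Set ℝ} (hu : IsPCIn u S) : IsConstOff u 0 1 S := by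
  obtain ⟨m, x, a, h, hS⟩ := hu
  exact h.isConstOff hS

lemma IsPCRep.exists_eq_succ {u : ℝ → ℝ} {m : ℕ} {x : Fin (m + 1) → ℝ} {a : Fin m → ℝ}
    (h : IsPCRep u x a) : ∃ k, m = k + 1 :=
  Nat.exists_eq_succ_of_ne_zero fun hm => by
    subst hm
    exact zero_ne_one (h.2.1.symm.trans h.2.2.1)

lemma IsPCIn.exists_finset_jumps {u : ℝ → ℝ} {S : Set ℝ} (hu : IsPCIn u S) :
    ∃ T : Finset ℝ, T.card ≤ jumps u ∧ IsConstOff u 0 1 T := by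
  obtain ⟨x, a, h⟩ :
      ∃ (x : Fin (jumps u + 2) → ℝ) (a : Fin (jumps u + 1) → ℝ), IsPCRep u x a := by
    obtain ⟨m, x, a, h, -⟩ := hu
    obtain ⟨k, rfl⟩ := h.exists_eq_succ
    exact Nat.sInf_mem
      (s := {jj | ∃ (x : Fin (jj + 2) → ℝ) (a : Fin (jj + 1) → ℝ), IsPCRep u x a}) ⟨k, x, a, h⟩
  refine ⟨Finset.univ.image fun i : Fin (jumps u) => x i.castSucc.succ,
    Finset.card_image_le.trans_eq (Finset.card_fin _), h.isConstOff fun i hi hi' => ?_⟩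
  obtain ⟨k, rfl⟩ := Fin.exists_succ_eq.2 hi
  obtain ⟨l, rfl⟩ := Fin.exists_castSucc_eq.2 fun hk : k = Fin.last (jumps u) =>
    hi' (by rw [hk, Fin.succ_last])
  exact Finset.mem_coe.2 (Finset.mem_image_of_mem _ (Finset.mem_univ l))

variable {n : ℕ}

lemma stepOn_congr {s s' : Fin n → ℝ} {t t' : ℝ} (α : Fin (n + 1) → ℝ)
    (h : ∀ i, s i < t ↔ s' i < t') : stepOn s α t = stepOn s' α t' := by
  simp only [stepOn, h]

lemma stepOn_eq {s : Fin n → ℝ} {t : ℝ} (α : Fin (n + 1) → ℝ) (c : Fin (n + 1))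
    (h : ∀ i, s i < t ↔ i.castSucc < c) : stepOn s α t = α c := by
  have hcard : (Finset.univ.filter fun i : Fin n => (i : ℕ) < c).card = c := by
    rw [Fin.card_filter_val_lt]
    exact min_eq_right (by omega)
  simp only [stepOn, h, Fin.lt_def, Fin.val_castSucc, hcard]

lemma stepOn_eq_ite {s : Fin n → ℝ} {t : ℝ} (α : Fin (n + 1) → ℝ) (i : Fin n)
    (hlt : ∀ k < i, s k < t) (hgt : ∀ k, i < k → t ≤ s k) :
    stepOn s α t = if s i < t then α i.succ else α i.castSucc := by
  split_ifs with h
  · refine stepOn_eq α _ fun k => ?_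
    rw [Fin.castSucc_lt_succ_iff]
    rcases le_or_gt k i with hk | hk
    · exact iff_of_true (hk.eq_or_lt.elim (fun hki => hki ▸ h) (hlt k)) hk
    · exact iff_of_false (hgt k hk).not_gt hk.not_ge
  · refine stepOn_eq α _ fun k => ?_
    rw [Fin.castSucc_lt_castSucc_iff]
    rcases lt_or_ge k i with hk | hk
    · exact iff_of_true (hlt k hk) hk
    · exact iff_of_false (hk.eq_or_lt.elim (fun hik => hik ▸ h) fun hik => (hgt k hik).not_gt)
        hk.not_gt

lemma jext_succ_castSucc (j : Fin (n + 1) → ℝ) (i : Fin (n + 1)) :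
    jext j i.succ.castSucc = j i := by
  simp only [jext, ← Fin.succ_castSucc, Fin.cons_succ, Fin.snoc_castSucc]

lemma jext_zero (j : Fin (n + 1) → ℝ) : jext j 0 = 0 := rfl

lemma jext_last (j : Fin (n + 1) → ℝ) : jext j (Fin.last (n + 2)) = 1 := by
  rw [jext, ← Fin.succ_last, Fin.cons_succ, Fin.snoc_last]

lemma strictMono_jext {s : Fin (n + 1) → ℝ} (hs : StrictMono s) (h0 : 0 < s 0)
    (h1 : s (Fin.last n) < 1) : StrictMono (jext s) := by
  refine Fin.strictMono_iff_lt_succ.2 fun i => ?_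
  cases i using Fin.cases with
  | zero => exact h0.trans_eq (jext_succ_castSucc s 0).symm
  | succ k =>
    rw [jext_succ_castSucc]
    cases k using Fin.lastCases with
    | last => rwa [Fin.succ_last, Fin.succ_last, jext_last]
    | cast l =>
      rw [Fin.succ_castSucc, Fin.succ_castSucc, jext_succ_castSucc]
      exact hs Fin.castSucc_lt_succ

lemma stepOn_eq_of_mem_Ioo_jext {s : Fin (n + 1) → ℝ} (hs : StrictMono (jext s))
    (α : Fin (n + 2) → ℝ) {l : Fin (n + 2)} {t : ℝ}
    (ht : t ∈ Ioo (jext s l.castSucc) (jext s l.succ)) : stepOn s α t = α l := by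
  refine stepOn_eq α l fun i => ?_
  rw [Fin.castSucc_lt_iff_succ_le, ← jext_succ_castSucc s i]
  refine ⟨fun hit => Fin.castSucc_lt_succ_iff.1 (hs.lt_iff_lt.1 (hit.trans ht.2)), fun hil => ?_⟩
  exact (hs.monotone (Fin.castSucc_le_castSucc_iff.2 hil)).trans_lt ht.1

lemma isPCRep_stepOn {s : Fin (n + 1) → ℝ} (hs : StrictMono s) (h0 : 0 < s 0)
    (h1 : s (Fin.last n) < 1) (α : Fin (n + 2) → ℝ) : IsPCRep (stepOn s α) (jext s) α := by
  have hmono := strictMono_jext hs h0 h1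
  refine ⟨hmono, jext_zero s, jext_last s, ae_mu01_iff.2 ?_⟩
  filter_upwards [ae_notMem_finset (Finset.univ.image (jext s))] with t ht ht01
  have hne : ∀ i, jext s i ≠ t := fun i hi =>
    ht (Finset.mem_image.2 ⟨i, Finset.mem_univ _, hi⟩)
  obtain ⟨l, hlt, htl⟩ := exists_castSucc_le_and_lt_succ (x := jext s) (c := t) ht01.1
    (lt_of_le_of_ne (ht01.2.trans_eq (jext_last s).symm) (hne _).symm)
  have htl : t ∈ Ioo (jext s l.castSucc) (jext s l.succ) := ⟨lt_of_le_of_ne hlt (hne _), htl⟩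
  rw [stepF_eq hmono α htl, stepOn_eq_of_mem_Ioo_jext hmono α htl]

end StepFunction

section Separated

variable {n : ℕ} {r : ℝ}

/-- The points `j i` are at distance at least `2 * r` from each other and at least `r` from the
endpoints of `[0, 1]`, so the windows of radius `r` around them are disjoint and lie
in `[0, 1]`. -/
structure IsSeparated (j : Fin n → ℝ) (r : ℝ) : Prop where
  two_mul_le_sub : ∀ i k, i < k → 2 * r ≤ j k - j i
  le_apply : ∀ i, r ≤ j i
  le_one_sub : ∀ i, r ≤ 1 - j i

lemma mem_Ioo_sub_add_iff {c t : ℝ} : t ∈ Ioo (c - r) (c + r) ↔ |t - c| < r := by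
  rw [← Real.ball_eq_Ioo, Metric.mem_ball, Real.dist_eq]

namespace IsSeparated

variable {j s : Fin n → ℝ} {i : Fin n} {t : ℝ}

lemma Ioo_subset (hj : IsSeparated j r) (i : Fin n) : Ioo (j i - r) (j i + r) ⊆ Icc (0 : ℝ) 1 :=
  fun t ht => ⟨by linarith [ht.1, hj.le_apply i], by linarith [ht.2, hj.le_one_sub i]⟩

lemma mem_Icc (hj : IsSeparated j r) (hr : 0 ≤ r) (i : Fin n) : j i ∈ Icc (0 : ℝ) 1 :=
  ⟨hr.trans (hj.le_apply i), by linarith [hj.le_one_sub i]⟩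

lemma pairwise_disjoint (hj : IsSeparated j r) :
    Pairwise (Function.onFun Disjoint fun i => Ioo (j i - r) (j i + r)) := by
  refine (pairwise_disjoint_on _).2 fun i k hik => disjoint_left.2 fun t hti htk => ?_
  linarith [hj.two_mul_le_sub i k hik, hti.2, htk.1]

lemma le_abs_sub_of_ne (hj : IsSeparated j r) (ht : |t - j i| < r) {k : Fin n} (hki : k ≠ i) :
    r ≤ |t - j k| := by
  by_contra! hk
  exact disjoint_left.1 (hj.pairwise_disjoint hki) (mem_Ioo_sub_add_iff.2 hk)
    (mem_Ioo_sub_add_iff.2 ht)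

lemma strictMono_of_near (hj : IsSeparated j r) (hs : ∀ i, |s i - j i| < r) : StrictMono s :=
  fun i k hik => by
    linarith [hj.two_mul_le_sub i k hik, (abs_lt.1 (hs i)).2, (abs_lt.1 (hs k)).1]

lemma stepOn_eq_ite_of_near (hj : IsSeparated j r) (hs : ∀ i, |s i - j i| < r)
    (α : Fin (n + 1) → ℝ) (ht : |t - j i| < r) :
    stepOn s α t = if s i < t then α i.succ else α i.castSucc := by
  obtain ⟨hlt, hgt⟩ := abs_lt.1 ht
  refine stepOn_eq_ite α i (fun k hk => ?_) fun k hk => ?_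
  · linarith [hj.two_mul_le_sub k i hk, (abs_lt.1 (hs k)).2]
  · linarith [hj.two_mul_le_sub i k hk, (abs_lt.1 (hs k)).1]

lemma sum_card_filter_le (hj : IsSeparated j r) (T : Finset ℝ) :
    ∑ i, (T.filter (· ∈ Ioo (j i - r) (j i + r))).card ≤ T.card := by
  rw [← Finset.card_biUnion]
  · exact Finset.card_le_card (Finset.biUnion_subset.2 fun i _ => Finset.filter_subset _ _)
  · exact fun i _ k _ hik => Finset.disjoint_filter.2 fun t _ hi hk =>
      disjoint_left.1 (hj.pairwise_disjoint hik) hi hk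

lemma L1dist_eq (hj : IsSeparated j r) {u v : ℝ → ℝ} (hu : IntegrableOn u (Icc 0 1))
    (hv : IntegrableOn v (Icc 0 1)) :
    L1dist u v = (∑ i, ∫ t in Ioo (j i - r) (j i + r), |u t - v t|) +
      ∫ t in Icc 0 1 \ ⋃ i, Ioo (j i - r) (j i + r), |u t - v t| := by
  have hint : IntegrableOn (fun t => |u t - v t|) (Icc 0 1) := (hu.sub hv).abs
  rw [← integral_iUnion_fintype (fun _ => measurableSet_Ioo) hj.pairwise_disjoint
    fun i => hint.mono_set (hj.Ioo_subset i),
    setIntegral_sdiff (MeasurableSet.iUnion fun _ => measurableSet_Ioo) hint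
      (iUnion_subset hj.Ioo_subset), L1dist, mu01, add_sub_cancel]

end IsSeparated

lemma stepOn_eq_of_far {j s : Fin n → ℝ} {t : ℝ} (α : Fin (n + 1) → ℝ)
    (hs : ∀ i, |s i - j i| < r) (ht : ∀ i, r ≤ |t - j i|) : stepOn s α t = stepOn j α t := by
  refine stepOn_congr α fun i => ?_
  obtain ⟨hlt, hgt⟩ := abs_lt.1 (hs i)
  rcases le_abs.1 (ht i) with h | h
  · exact iff_of_true (by linarith) (by linarith)
  · exact iff_of_false (by linarith) (by linarith)

namespace IsSeparated

variable {j s : Fin (n + 1) → ℝ}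

lemma isPCRep_stepOn_of_near (hj : IsSeparated j r) (hs : ∀ i, |s i - j i| < r)
    (α : Fin (n + 2) → ℝ) : IsPCRep (stepOn s α) (jext s) α :=
  isPCRep_stepOn (hj.strictMono_of_near hs)
    (by linarith [hj.le_apply 0, (abs_lt.1 (hs 0)).1])
    (by linarith [hj.le_one_sub (Fin.last n), (abs_lt.1 (hs (Fin.last n))).2]) α

lemma isPCIn_stepOn_of_near (hj : IsSeparated j r) (hs : ∀ i, |s i - j i| < r)
    (α : Fin (n + 2) → ℝ) {S : Set ℝ} (hS : ∀ i, s i ∈ S) : IsPCIn (stepOn s α) S := by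
  refine ⟨n + 2, jext s, α, hj.isPCRep_stepOn_of_near hs α, fun i hi hi' => ?_⟩
  obtain ⟨k, rfl⟩ := Fin.exists_castSucc_eq.2 hi'
  obtain ⟨l, rfl⟩ := Fin.exists_succ_eq.2 fun hk : k = 0 => hi (by rw [hk, Fin.castSucc_zero])
  rw [jext_succ_castSucc]
  exact hS l

lemma jumps_stepOn_le (hj : IsSeparated j r) (hs : ∀ i, |s i - j i| < r)
    (α : Fin (n + 2) → ℝ) : jumps (stepOn s α) ≤ n + 1 :=
  Nat.sInf_le ⟨jext s, α, hj.isPCRep_stepOn_of_near hs α⟩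

end IsSeparated

section Lmin

variable {j : Fin (n + 1) → ℝ}

lemma lmin_pos (hj : StrictMono j) (h0 : 0 < j 0) (h1 : j (Fin.last n) < 1) : 0 < lmin j :=
  (Finset.lt_inf'_iff _).2 fun _ _ =>
    sub_pos.2 (strictMono_jext hj h0 h1 Fin.castSucc_lt_succ)

lemma lmin_le_jext_sub (hj : StrictMono j) (h0 : 0 < j 0) (h1 : j (Fin.last n) < 1)
    {i k : Fin (n + 3)} (hik : i < k) : lmin j ≤ jext j k - jext j i := by
  obtain ⟨l, rfl⟩ := Fin.exists_castSucc_eq.2 (Fin.ne_last_of_lt hik)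
  have hlk := (strictMono_jext hj h0 h1).monotone (Fin.castSucc_lt_iff_succ_le.1 hik)
  have hl : lmin j ≤ jext j l.succ - jext j l.castSucc := Finset.inf'_le _ (Finset.mem_univ l)
  linarith

lemma isSeparated_lmin (hj : StrictMono j) (h0 : 0 < j 0) (h1 : j (Fin.last n) < 1) :
    IsSeparated j (lmin j / 2) := by
  have hpos := lmin_pos hj h0 h1
  refine ⟨fun i k hik => ?_, fun i => ?_, fun i => ?_⟩
  · have h := lmin_le_jext_sub hj h0 h1
      (Fin.castSucc_lt_castSucc_iff.2 (Fin.succ_lt_succ_iff.2 hik))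
    rw [jext_succ_castSucc, jext_succ_castSucc] at h
    linarith
  · have h := lmin_le_jext_sub hj h0 h1 (Fin.castSucc_pos (Fin.succ_pos i))
    rw [jext_succ_castSucc, jext_zero] at h
    linarith
  · have h := lmin_le_jext_sub hj h0 h1 (Fin.castSucc_lt_last i.succ)
    rw [jext_succ_castSucc, jext_last] at h
    linarith

end Lmin

end Separated

section BlurredStep

variable {n : ℕ} {j : Fin n → ℝ} {α : Fin (n + 1) → ℝ} {r δ : ℝ} {X : Finset ℝ} {f : ℝ → ℝ}

/-- `f` is a blurred version of `stepOn j α` that is constant on the cells of `X`: it agrees with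
`stepOn j α` at distance at least `δ` from the jumps `j i`, and its value on a cell at distance
less than `r` from `j i` interpolates between the two adjacent plateau values according to the
position of the midpoint of the cell relative to `j i`. -/
structure IsBlurredStep (j : Fin n → ℝ) (α : Fin (n + 1) → ℝ) (r δ : ℝ) (X : Finset ℝ)
    (f : ℝ → ℝ) : Prop where
  separated : IsSeparated j r
  mesh : IsMesh X δ
  lt : δ < r
  isConstOff : IsConstOff f 0 1 X
  plateau : ∀ t ∈ Icc (0 : ℝ) 1, t ∉ X → (∀ i, δ ≤ |t - j i|) → f t = stepOn j α t
  interpolation : ∀ i a b t, IsCell X a b → t ∈ Ioo a b → |t - j i| < r → ∃ H, IsSymmCdf H ∧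
    f t = α i.castSucc + (α i.succ - α i.castSucc) * H ((a + b) / 2 - j i)

lemma exists_isSample {F : ℝ → ℝ} {a b : ℝ}
    (hf : IntegralSampled (X : Set ℝ) F f ∨ PointSampled (X : Set ℝ) F f) (hab : IsCell X a b) :
    ∃ z, IsSample F a b z ∧ ∀ t ∈ Ioo a b, f t = z := by
  have hXab : Ioo a b ∩ X = ∅ := (inter_comm _ _).trans hab.disjoint.inter_eq
  rcases hf with hf | hf
  · exact ⟨_, Or.inl rfl, hf a b (Or.inr (Or.inr hab.left_mem)) (Or.inr (Or.inr hab.right_mem))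
      hab.lt hXab⟩
  · exact ⟨_, Or.inr rfl, hf a b (Or.inr (Or.inr hab.left_mem)) (Or.inr (Or.inr hab.right_mem))
      hab.lt hXab⟩

lemma isConstOff_of_forall_isCell {η : ℝ} (hX : IsMesh X η)
    (hf : ∀ a b, IsCell X a b → ∃ z, ∀ t ∈ Ioo a b, f t = z) : IsConstOff f 0 1 X := by
  intro c d hc hcd hd hdisj
  have hm : (c + d) / 2 ∈ Ioo c d := ⟨by linarith, by linarith⟩
  obtain ⟨a, b, hab, hmab, -⟩ := hX.exists_isCell (Ioo_subset_Icc_self (Ioo_subset_Ioo hc hd hm))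
    fun h => disjoint_left.1 hdisj h hm
  have hac : a ≤ c := le_of_not_gt fun h =>
    disjoint_left.1 hdisj hab.left_mem ⟨h, hmab.1.trans hm.2⟩
  have hdb : d ≤ b := le_of_not_gt fun h =>
    disjoint_left.1 hdisj hab.right_mem ⟨hm.1.trans hmab.2, h⟩
  obtain ⟨z, hz⟩ := hf a b hab
  exact ⟨z, Eventually.of_forall fun t ht => hz t (Ioo_subset_Ioo hac hdb ht)⟩

lemma isBlurredStep_of_sampled {K : ℝ → ℝ} {κ η : ℝ} (hj : IsSeparated j r)
    (hK : IsSymmKernel K κ) (hX : IsMesh X η) (hr : κ + η < r)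
    (hf : IntegralSampled (X : Set ℝ) (convK K (stepOn j α)) f ∨
      PointSampled (X : Set ℝ) (convK K (stepOn j α)) f) :
    IsBlurredStep j α r (κ + η) X f := by
  have hnear : ∀ a b, IsCell X a b → ∀ t ∈ Ioo a b, ∀ y ∈ Ioo a b, ∀ x, |y - x| ≤ κ →
      |x - t| < κ + η := fun a b hab t ht y hy x hyx => by
    have hη := hX.sub_le a b hab
    rw [abs_le] at hyx
    rw [abs_lt]
    constructor <;> linarith [hyx.1, hyx.2, ht.1, ht.2, hy.1, hy.2]
  refine ⟨hj, hX.mono (le_add_of_nonneg_left hK.pos.le), hr,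
    isConstOff_of_forall_isCell hX fun a b hab => (exists_isSample hf hab).imp fun _ => And.right,
    fun t ht htX hfar => ?_, fun i a b t hab ht hti => ?_⟩
  · obtain ⟨a, b, hab, htab, -⟩ := hX.exists_isCell ht htX
    obtain ⟨z, hz, hfz⟩ := exists_isSample hf hab
    refine (hfz t htab).trans (hz.eq_const hab.lt fun y hy => hK.convK_eq_const fun x hyx => ?_)
    obtain ⟨hlt, hgt⟩ := abs_lt.1 (hnear a b hab t htab y hy x hyx)
    refine stepOn_congr α fun i => ?_
    rcases le_abs.1 (hfar i) with h | h
    · exact iff_of_true (by linarith) (by linarith [hX.pos, hK.pos])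
    · exact iff_of_false (by linarith) (by linarith [hX.pos, hK.pos])
  · obtain ⟨z, hz, hfz⟩ := exists_isSample hf hab
    rw [hfz t ht]
    refine hz.exists_isSymmCdf hab.lt hK.isSymmCdf_kernelCdf (continuous_kernelCdf hK.integrable)
      fun y hy => hK.convK_eq_kernelCdf fun x hyx => ?_
    obtain ⟨hlt, hgt⟩ := abs_lt.1 (hnear a b hab t ht y hy x hyx)
    obtain ⟨hlt', hgt'⟩ := abs_lt.1 hti
    refine stepOn_eq_ite α i (fun k hk => ?_) fun k hk => ?_
    · linarith [hj.two_mul_le_sub k i hk]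
    · linarith [hj.two_mul_le_sub i k hk]

namespace IsBlurredStep

variable {i : Fin n} {a b s t : ℝ}

lemma pos_radius (hf : IsBlurredStep j α r δ X f) : 0 < r :=
  hf.mesh.pos.trans hf.lt

lemma abs_sub_lt_of_isNearest (hf : IsBlurredStep j α r δ X f) (hs : IsNearest X (j i) s) :
    |s - j i| < r := by
  rw [abs_sub_comm]
  exact (hs.abs_sub_le hf.mesh (hf.separated.mem_Icc hf.pos_radius.le i)).trans_lt hf.lt

lemma exists_eq_interpolation (hf : IsBlurredStep j α r δ X f) (hab : IsCell X a b)
    (ht : t ∈ Ioo a b) (hti : |t - j i| < r) : ∃ H, IsSymmCdf H ∧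
      |α i.castSucc - f t| = |α i.succ - α i.castSucc| * H ((a + b) / 2 - j i) ∧
      |α i.succ - f t| = |α i.succ - α i.castSucc| * (1 - H ((a + b) / 2 - j i)) := by
  obtain ⟨H, hH, hft⟩ := hf.interpolation i a b t hab ht hti
  rw [hft]
  exact ⟨H, hH, abs_left_sub_interpolation (hH.nonneg _), abs_right_sub_interpolation (hH.le_one _)⟩

lemma abs_left_le_iff (hf : IsBlurredStep j α r δ X f) (hα : α i.castSucc ≠ α i.succ)
    (hab : IsCell X a b) (ht : t ∈ Ioo a b) (hti : |t - j i| < r) :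
    |α i.castSucc - f t| ≤ |α i.succ - f t| ↔ a + b ≤ 2 * j i := by
  obtain ⟨H, hH, hl, hr⟩ := hf.exists_eq_interpolation hab ht hti
  rw [hl, hr, mul_le_mul_iff_right₀ (abs_sub_pos.2 hα.symm), le_sub_iff_add_le, ← two_mul,
    ← le_div_iff₀' two_pos, hH.le_half_iff, sub_nonpos, div_le_iff₀' two_pos]

lemma abs_right_le_iff (hf : IsBlurredStep j α r δ X f) (hα : α i.castSucc ≠ α i.succ)
    (hab : IsCell X a b) (ht : t ∈ Ioo a b) (hti : |t - j i| < r) :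
    |α i.succ - f t| ≤ |α i.castSucc - f t| ↔ 2 * j i ≤ a + b := by
  obtain ⟨H, hH, hl, hr⟩ := hf.exists_eq_interpolation hab ht hti
  rw [hl, hr, mul_le_mul_iff_right₀ (abs_sub_pos.2 hα.symm), sub_le_iff_le_add, ← two_mul,
    ← div_le_iff₀' two_pos, hH.half_le_iff, sub_nonneg, le_div_iff₀' two_pos]

lemma isBlurredJump (hf : IsBlurredStep j α r δ X f) (i : Fin n) :
    IsBlurredJump f (α i.castSucc) (α i.succ) (j i) δ r := by
  have hr := hf.pos_radius
  have hplateau : ∀ᵐ t, |t - j i| < r → δ ≤ |t - j i| →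
      f t = if j i < t then α i.succ else α i.castSucc := by
    filter_upwards [ae_notMem_finset X] with t htX hti htδ
    rw [hf.plateau t (hf.separated.Ioo_subset i (mem_Ioo_sub_add_iff.2 hti)) htX fun k => ?_,
      hf.separated.stepOn_eq_ite_of_near (fun k => by rwa [sub_self, abs_zero]) α hti]
    by_cases hki : k = i
    · rwa [hki]
    · exact hf.lt.le.trans (hf.separated.le_abs_sub_of_ne hti hki)
  refine ⟨hf.mesh.pos.le, hf.lt,
    hf.isConstOff.integrableOn_Icc.mono_set (hf.separated.Ioo_subset i),
    hplateau.mono fun t h ht => ?_, hplateau.mono fun t h ht => ?_, ?_⟩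
  · rw [h, if_neg (by linarith [ht.2, hf.mesh.pos])]
    · exact mem_Ioo_sub_add_iff.1 ⟨ht.1, by linarith [ht.2, hf.mesh.pos]⟩
    · exact le_abs.2 (Or.inr (by linarith [ht.2]))
  · rw [h, if_pos (by linarith [ht.1, hf.mesh.pos])]
    · exact mem_Ioo_sub_add_iff.1 ⟨by linarith [ht.1, hf.mesh.pos], ht.2⟩
    · exact le_abs.2 (Or.inl (by linarith [ht.1]))
  · filter_upwards [ae_notMem_finset X] with t htX ht
    obtain ⟨a, b, hab, htab, -⟩ := hf.mesh.exists_isCell (hf.separated.Ioo_subset i ht) htX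
    obtain ⟨H, -, hl, hr⟩ := hf.exists_eq_interpolation hab htab (mem_Ioo_sub_add_iff.1 ht)
    rw [hl, hr]
    ring

lemma abs_sub_eq_plateauDist_of_isNearest (hf : IsBlurredStep j α r δ X f)
    (hα : α i.castSucc ≠ α i.succ) (hs : IsNearest X (j i) s) :
    ∀ᵐ t, t ∈ Ioo (j i - r) (j i + r) → |(if s < t then α i.succ else α i.castSucc) - f t| =
      plateauDist (α i.castSucc) (α i.succ) (f t) := by
  filter_upwards [ae_notMem_finset X] with t htX ht
  obtain ⟨a, b, hab, htab, -⟩ := hf.mesh.exists_isCell (hf.separated.Ioo_subset i ht) htX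
  rw [mem_Ioo_sub_add_iff] at ht
  rcases hab.le_or_le s hs.1 with hsa | hbs
  · rw [if_pos (hsa.trans_lt htab.1)]
    exact (min_eq_right ((hf.abs_right_le_iff hα hab htab ht).2 (hs.two_mul_le hab hsa))).symm
  · rw [if_neg (htab.2.trans_le hbs).not_gt]
    exact (min_eq_left ((hf.abs_left_le_iff hα hab htab ht).2 (hs.le_two_mul hab hbs))).symm

lemma isNearest_of_abs_sub_eq_plateauDist (hf : IsBlurredStep j α r δ X f)
    (hα : α i.castSucc ≠ α i.succ) (hsX : s ∈ X) (hs : s ∈ Ioo (j i - r) (j i + r))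
    (heq : ∀ᵐ t, t ∈ Ioo (j i - r) (j i + r) →
      |(if s < t then α i.succ else α i.castSucc) - f t| =
        plateauDist (α i.castSucc) (α i.succ) (f t)) : IsNearest X (j i) s := by
  refine isNearest_of_forall_isCell hsX (fun a ha => ?_) fun b hb => ?_
  · obtain ⟨t, ht, htI, hteq⟩ := exists_mem_Ioo_of_ae (max_lt ha.lt hs.1)
      (heq.mono fun t h (ht : t ∈ Ioo (max a (j i - r)) s) =>
        have htI : t ∈ Ioo (j i - r) (j i + r) :=
          ⟨(le_max_right _ _).trans_lt ht.1, ht.2.trans hs.2⟩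
        And.intro htI (h htI))
    rw [if_neg ht.2.not_gt] at hteq
    exact (hf.abs_left_le_iff hα ha ⟨(le_max_left _ _).trans_lt ht.1, ht.2⟩
      (mem_Ioo_sub_add_iff.1 htI)).1 (hteq.trans_le (min_le_right _ _))
  · obtain ⟨t, ht, htI, hteq⟩ := exists_mem_Ioo_of_ae (lt_min hb.lt hs.2)
      (heq.mono fun t h (ht : t ∈ Ioo s (min b (j i + r))) =>
        have htI : t ∈ Ioo (j i - r) (j i + r) :=
          ⟨hs.1.trans ht.1, ht.2.trans_le (min_le_right _ _)⟩
        And.intro htI (h htI))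
    rw [if_pos ht.1] at hteq
    exact (hf.abs_right_le_iff hα hb ⟨ht.1, ht.2.trans_le (min_le_left _ _)⟩
      (mem_Ioo_sub_add_iff.1 htI)).1 (hteq.trans_le (min_le_left _ _))

end IsBlurredStep

end BlurredStep

section Energy

variable {n : ℕ} {γ r δ : ℝ}

/-- `γ` is an admissible price for the jumps of a step function with values `α`: it exceeds the
error `δ * |h|` that a blurred jump of height `h` causes, and still is so small that omitting such
a jump costs more than making it. -/
structure IsAdmissible {n : ℕ} (γ : ℝ) (α : Fin (n + 1) → ℝ) (δ r : ℝ) : Prop where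
  mul_lt : ∀ i : Fin n, δ * |α i.succ - α i.castSucc| < γ
  add_mul_lt : ∀ i : Fin n,
    γ + δ * |α i.succ - α i.castSucc| < (r - δ) * |α i.succ - α i.castSucc|

lemma IsAdmissible.ne {α : Fin (n + 1) → ℝ} (hγ : IsAdmissible γ α δ r) (i : Fin n) :
    α i.castSucc ≠ α i.succ := fun h => by
  have hlt := hγ.mul_lt i
  have hadd := hγ.add_mul_lt i
  rw [h, sub_self, abs_zero, mul_zero] at hlt hadd
  linarith

/-- The minimal value of the Potts functional: each of the windows of radius `r` around the jumps
`j i` contributes the price of one jump and the least error that a function with the two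
adjacent plateau values can have there. -/
def optimalEnergy (γ : ℝ) (j : Fin n → ℝ) (α : Fin (n + 1) → ℝ) (r : ℝ) (f : ℝ → ℝ) : ℝ :=
  ∑ i, (γ + ∫ t in Ioo (j i - r) (j i + r), plateauDist (α i.castSucc) (α i.succ) (f t))

lemma sum_window_energy_add_le_pottsVal {j : Fin n → ℝ} {f u : ℝ → ℝ} (hj : IsSeparated j r)
    (hγ : 0 ≤ γ) (hf : IntegrableOn f (Icc 0 1)) (hu : IntegrableOn u (Icc 0 1)) {T : Finset ℝ}
    (hT : T.card ≤ jumps u) :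
    (∑ i, (γ * (T.filter (· ∈ Ioo (j i - r) (j i + r))).card +
        ∫ t in Ioo (j i - r) (j i + r), |u t - f t|)) +
      ∫ t in Icc 0 1 \ ⋃ i, Ioo (j i - r) (j i + r), |u t - f t| ≤ PottsVal γ f u := by
  have hcard : (∑ i, ((T.filter (· ∈ Ioo (j i - r) (j i + r))).card : ℝ)) ≤ jumps u := by
    exact_mod_cast (hj.sum_card_filter_le T).trans hT
  rw [PottsVal, hj.L1dist_eq hu hf, Finset.sum_add_distrib, ← Finset.mul_sum, add_assoc]
  exact add_le_add_left (mul_le_mul_of_nonneg_left hcard hγ) _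

variable {j s : Fin (n + 1) → ℝ} {α : Fin (n + 2) → ℝ} {X : Finset ℝ} {f u : ℝ → ℝ}

lemma IsAdmissible.pos {γ : ℝ} (hγ : IsAdmissible γ α δ r) (hδ : 0 ≤ δ) : 0 < γ :=
  (mul_nonneg hδ (abs_nonneg _)).trans_lt (hγ.mul_lt 0)

namespace IsBlurredStep

lemma pottsVal_stepOn_le (hf : IsBlurredStep j α r δ X f) (hγ : IsAdmissible γ α δ r)
    (hs : ∀ i, IsNearest X (j i) (s i)) :
    PottsVal γ f (stepOn s α) ≤ optimalEnergy γ j α r f := by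
  have hsr : ∀ i, |s i - j i| < r := fun i => hf.abs_sub_lt_of_isNearest (hs i)
  have hwindow : ∀ i, ∫ t in Ioo (j i - r) (j i + r), |stepOn s α t - f t| =
      ∫ t in Ioo (j i - r) (j i + r), plateauDist (α i.castSucc) (α i.succ) (f t) := fun i =>
    setIntegral_congr_ae measurableSet_Ioo <|
      (hf.abs_sub_eq_plateauDist_of_isNearest (hγ.ne i) (hs i)).mono fun t h ht => by
        rw [hf.separated.stepOn_eq_ite_of_near hsr α (mem_Ioo_sub_add_iff.1 ht), h ht]
  have houtside : ∫ t in Icc 0 1 \ ⋃ i, Ioo (j i - r) (j i + r), |stepOn s α t - f t| = 0 := by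
    rw [setIntegral_congr_ae (g := fun _ => 0)
      (measurableSet_Icc.diff (MeasurableSet.iUnion fun i => measurableSet_Ioo)), integral_zero]
    filter_upwards [ae_notMem_finset X] with t htX ht
    have hfar : ∀ i, r ≤ |t - j i| := fun i =>
      not_lt.1 fun h => ht.2 (mem_iUnion.2 ⟨i, mem_Ioo_sub_add_iff.2 h⟩)
    rw [hf.plateau t ht.1 htX fun i => hf.lt.le.trans (hfar i), stepOn_eq_of_far α hsr hfar,
      sub_self, abs_zero]
  have hjumps : γ * jumps (stepOn s α) ≤ γ * (n + 1) :=
    mul_le_mul_of_nonneg_left (by exact_mod_cast hf.separated.jumps_stepOn_le hsr α)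
      (hγ.pos hf.mesh.pos.le).le
  have hint : IntegrableOn (stepOn s α) (Icc 0 1) :=
    (hf.separated.isPCIn_stepOn_of_near hsr α fun i => (hs i).1).isConstOff.integrableOn_Icc
  rw [PottsVal, hf.separated.L1dist_eq hint hf.isConstOff.integrableOn_Icc, houtside, add_zero,
    Finset.sum_congr rfl fun i _ => hwindow i, optimalEnergy, Finset.sum_add_distrib,
    Finset.sum_const, Finset.card_univ, Fintype.card_fin, nsmul_eq_mul, mul_comm _ γ]
  exact_mod_cast add_le_add_left hjumps _

lemma le_window_energy (hf : IsBlurredStep j α r δ X f) (hγ : IsAdmissible γ α δ r) {T : Finset ℝ}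
    (hT : IsConstOff u 0 1 T) (i : Fin (n + 1)) :
    γ + ∫ t in Ioo (j i - r) (j i + r), plateauDist (α i.castSucc) (α i.succ) (f t) ≤
      γ * (T.filter (· ∈ Ioo (j i - r) (j i + r))).card +
        ∫ t in Ioo (j i - r) (j i + r), |u t - f t| :=
  (hf.isBlurredJump i).le_energy (hγ.mul_lt i) (hγ.add_mul_lt i)
    (hT.integrableOn_Icc.mono_set (hf.separated.Ioo_subset i))
    (hT.mono (by linarith [hf.separated.le_apply i]) (by linarith [hf.separated.le_one_sub i]))

lemma optimalEnergy_le_pottsVal (hf : IsBlurredStep j α r δ X f) (hγ : IsAdmissible γ α δ r)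
    {S : Set ℝ} (hu : IsPCIn u S) : optimalEnergy γ j α r f ≤ PottsVal γ f u := by
  obtain ⟨T, hTcard, hT⟩ := hu.exists_finset_jumps
  calc optimalEnergy γ j α r f
      ≤ ∑ i, (γ * (T.filter (· ∈ Ioo (j i - r) (j i + r))).card +
          ∫ t in Ioo (j i - r) (j i + r), |u t - f t|) :=
        Finset.sum_le_sum fun i _ => hf.le_window_energy hγ hT i
    _ ≤ _ := le_add_of_nonneg_right (integral_nonneg fun _ => abs_nonneg _)
    _ ≤ PottsVal γ f u := sum_window_energy_add_le_pottsVal hf.separated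
        (hγ.pos hf.mesh.pos.le).le hf.isConstOff.integrableOn_Icc hT.integrableOn_Icc hTcard

lemma window_energy_le_and_ae_eq (hf : IsBlurredStep j α r δ X f) (hγ : IsAdmissible γ α δ r)
    {T : Finset ℝ} (hT : IsConstOff u 0 1 T) (hTcard : T.card ≤ jumps u)
    (hle : PottsVal γ f u ≤ optimalEnergy γ j α r f) :
    (∀ i, γ * (T.filter (· ∈ Ioo (j i - r) (j i + r))).card +
        ∫ t in Ioo (j i - r) (j i + r), |u t - f t| ≤
      γ + ∫ t in Ioo (j i - r) (j i + r), plateauDist (α i.castSucc) (α i.succ) (f t)) ∧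
    ∀ᵐ t, t ∈ Icc 0 1 → (∀ i, r ≤ |t - j i|) → u t = f t := by
  have hint : IntegrableOn (fun t => |u t - f t|) (Icc 0 1) :=
    (hT.integrableOn_Icc.sub hf.isConstOff.integrableOn_Icc).abs
  have hwindow := fun i (_ : i ∈ Finset.univ) => hf.le_window_energy hγ hT i
  have hsum := Finset.sum_le_sum hwindow
  have houtside : 0 ≤ ∫ t in Icc 0 1 \ ⋃ i, Ioo (j i - r) (j i + r), |u t - f t| :=
    integral_nonneg fun _ => abs_nonneg _
  have htotal := (sum_window_energy_add_le_pottsVal hf.separated (hγ.pos hf.mesh.pos.le).le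
    hf.isConstOff.integrableOn_Icc hT.integrableOn_Icc hTcard).trans hle
  rw [optimalEnergy] at htotal
  have heq := (Finset.sum_eq_sum_iff_of_le hwindow).1 (hsum.antisymm (by linarith))
  refine ⟨fun i => (heq i (Finset.mem_univ i)).ge, ?_⟩
  have hzero := (setIntegral_eq_zero_iff_of_nonneg_ae
    (Eventually.of_forall fun _ => abs_nonneg _) (hint.mono_set sdiff_subset)).1
    (houtside.antisymm' (by linarith))
  filter_upwards [(ae_restrict_iff' (measurableSet_Icc.diff
    (MeasurableSet.iUnion fun i => measurableSet_Ioo))).1 hzero] with t h ht hfar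
  refine sub_eq_zero.1 (abs_eq_zero.1 (h ⟨ht, fun hU => ?_⟩))
  obtain ⟨i, hi⟩ := mem_iUnion.1 hU
  exact (hfar i).not_gt (mem_Ioo_sub_add_iff.1 hi)

lemma exists_isNearest_of_energy_le (hf : IsBlurredStep j α r δ X f) (hγ : IsAdmissible γ α δ r)
    (hu : IsConstOff u 0 1 X) {T : Finset ℝ} (hT : IsConstOff u 0 1 T) {i : Fin (n + 1)}
    (hle : γ * (T.filter (· ∈ Ioo (j i - r) (j i + r))).card +
        ∫ t in Ioo (j i - r) (j i + r), |u t - f t| ≤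
      γ + ∫ t in Ioo (j i - r) (j i + r), plateauDist (α i.castSucc) (α i.succ) (f t)) :
    ∃ x, IsNearest X (j i) x ∧ ∀ᵐ t, t ∈ Ioo (j i - r) (j i + r) →
      u t = if x < t then α i.succ else α i.castSucc := by
  have hl : 0 ≤ j i - r := by linarith [hf.separated.le_apply i]
  have hr : j i + r ≤ 1 := by linarith [hf.separated.le_one_sub i]
  obtain ⟨x, hx, hxl, hxr, hopt⟩ := (hf.isBlurredJump i).exists_jump_of_energy_le (hγ.mul_lt i)
    (hγ.add_mul_lt i) (hT.integrableOn_Icc.mono_set (hf.separated.Ioo_subset i)) (hT.mono hl hr) hle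
  have hxX : x ∈ X := (hu.mono hl hr).mem_of_jump X.finite_toSet.isClosed hx hxl hxr (hγ.ne i)
  have hux : ∀ᵐ t, t ∈ Ioo (j i - r) (j i + r) →
      u t = if x < t then α i.succ else α i.castSucc :=
    ae_mem_Ioo_of_ae_split (hxl.mono fun t h ht => by rw [if_neg ht.2.not_gt, h ht])
      (hxr.mono fun t h ht => by rw [if_pos ht.1, h ht])
  refine ⟨x, hf.isNearest_of_abs_sub_eq_plateauDist (hγ.ne i) hxX hx ?_, hux⟩
  filter_upwards [hux, hopt] with t htu hto ht
  rw [← htu ht, hto ht]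

lemma exists_isNearest_of_pottsVal_le (hf : IsBlurredStep j α r δ X f)
    (hγ : IsAdmissible γ α δ r) (hu : IsPCIn u X)
    (hle : PottsVal γ f u ≤ optimalEnergy γ j α r f) :
    ∃ s : Fin (n + 1) → ℝ, (∀ i, IsNearest X (j i) (s i)) ∧ ∀ᵐ t ∂mu01, u t = stepOn s α t := by
  obtain ⟨T, hTcard, hT⟩ := hu.exists_finset_jumps
  obtain ⟨hwindow, houtside⟩ := hf.window_energy_le_and_ae_eq hγ hT hTcard hle
  choose s hs hus using fun i =>
    hf.exists_isNearest_of_energy_le hγ hu.isConstOff hT (hwindow i)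
  have hsr : ∀ i, |s i - j i| < r := fun i => hf.abs_sub_lt_of_isNearest (hs i)
  refine ⟨s, hs, ae_mu01_iff.2 ?_⟩
  filter_upwards [houtside, ae_all_iff.2 hus, ae_notMem_finset X] with t hout hwin htX ht
  by_cases hfar : ∀ i, r ≤ |t - j i|
  · rw [hout ht hfar, hf.plateau t ht htX fun i => hf.lt.le.trans (hfar i),
      stepOn_eq_of_far α hsr hfar]
  · push Not at hfar
    obtain ⟨i, hi⟩ := hfar
    rw [hwin i (mem_Ioo_sub_add_iff.2 hi), hf.separated.stepOn_eq_ite_of_near hsr α hi]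

end IsBlurredStep

end Energy

section Convergence

variable {n : ℕ} {j : Fin n → ℝ} {s : ℕ → Fin n → ℝ}

lemma measurable_stepOn (s : Fin n → ℝ) (α : Fin (n + 1) → ℝ) : Measurable (stepOn s α) := by
  have hcount : Measurable fun t => (Finset.univ.filter fun i => s i < t).card :=
    Monotone.measurable fun t t' htt' => Finset.card_le_card <|
      Finset.monotone_filter_right _ fun i _ hi => lt_of_lt_of_le hi htt'
  have hcomp : stepOn s α = (fun k => if h : k < n + 1 then α ⟨k, h⟩ else 0) ∘
      fun t => (Finset.univ.filter fun i => s i < t).card := by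
    funext t
    rw [Function.comp_apply,
      dif_pos (Nat.lt_succ_of_le ((Finset.card_filter_le _ _).trans (by simp)))]
    rfl
  rw [hcomp]
  exact measurable_from_nat.comp hcount

lemma abs_stepOn_le (s : Fin n → ℝ) (α : Fin (n + 1) → ℝ) (t : ℝ) : |stepOn s α t| ≤ ∑ i, |α i| :=
  Finset.single_le_sum (f := fun i => |α i|) (fun _ _ => abs_nonneg _) (Finset.mem_univ _)

lemma eventually_stepOn_eq (α : Fin (n + 1) → ℝ)
    (hs : ∀ i, Tendsto (fun k => s k i) atTop (nhds (j i))) {t : ℝ} (ht : ∀ i, j i ≠ t) :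
    ∀ᶠ k in atTop, stepOn (s k) α t = stepOn j α t := by
  have hlt : ∀ i, ∀ᶠ k in atTop, s k i < t ↔ j i < t := fun i => by
    rcases (ht i).lt_or_gt with h | h
    · exact ((hs i).eventually_lt_const h).mono fun k hk => iff_of_true hk h
    · exact ((hs i).eventually_const_lt h).mono fun k hk => iff_of_false hk.not_gt h.not_gt
  exact (eventually_all.2 hlt).mono fun k hk => stepOn_congr α hk

lemma tendsto_L1dist_stepOn (α : Fin (n + 1) → ℝ)
    (hs : ∀ i, Tendsto (fun k => s k i) atTop (nhds (j i))) :
    Tendsto (fun k => L1dist (stepOn (s k) α) (stepOn j α)) atTop (nhds 0) := by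
  have : IsFiniteMeasure mu01 := by
    rw [mu01]
    infer_instance
  rw [← integral_zero ℝ ℝ (μ := mu01)]
  refine tendsto_integral_of_dominated_convergence (fun _ => (∑ i, |α i|) + ∑ i, |α i|)
    (fun k => ((measurable_stepOn _ α).sub (measurable_stepOn j α)).norm.aestronglyMeasurable)
    (integrable_const _) (fun k => ae_of_all _ fun t => ?_) ?_
  · rw [Real.norm_eq_abs, abs_abs]
    exact (abs_sub _ _).trans (add_le_add (abs_stepOn_le _ α t) (abs_stepOn_le j α t))
  · refine ae_mu01_iff.2 ((ae_notMem_finset (Finset.univ.image j)).mono fun t ht _ => ?_)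
    have hne : ∀ i, j i ≠ t := fun i hi => ht (Finset.mem_image.2 ⟨i, Finset.mem_univ _, hi⟩)
    refine tendsto_const_nhds.congr' ((eventually_stepOn_eq α hs hne).mono fun k hk => ?_)
    simp only [hk, sub_self, abs_zero]

lemma tendsto_of_isNearest {X : ℕ → Finset ℝ} (hX : Monotone X) {y : ℝ}
    (hy : y ∈ closure (⋃ k, (X k : Set ℝ))) {x : ℕ → ℝ} (hx : ∀ k, IsNearest (X k) y (x k)) :
    Tendsto x atTop (nhds y) := by
  refine Metric.tendsto_atTop.2 fun ε hε => ?_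
  obtain ⟨p, hp, hyp⟩ := Metric.mem_closure_iff.1 hy ε hε
  obtain ⟨k₀, hk₀⟩ := mem_iUnion.1 hp
  refine ⟨k₀, fun k hk => ?_⟩
  rw [dist_comm]
  exact ((hx k).2 p (hX hk hk₀)).trans_lt hyp

end Convergence

section Minimizers

lemma pottsIn_of_isPCIn {γ : ℝ} {f u : ℝ → ℝ} {S : Set ℝ} (hu : IsPCIn u S) :
    PottsIn γ f S u = ENNReal.ofReal (PottsVal γ f u) :=
  if_pos hu

lemma pottsIn_of_not_isPCIn {γ : ℝ} {f u : ℝ → ℝ} {S : Set ℝ} (hu : ¬IsPCIn u S) :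
    PottsIn γ f S u = ∞ :=
  if_neg hu

lemma pottsVal_nonneg {γ : ℝ} (hγ : 0 ≤ γ) (f u : ℝ → ℝ) : 0 ≤ PottsVal γ f u :=
  add_nonneg (mul_nonneg hγ (Nat.cast_nonneg _)) (integral_nonneg fun _ => abs_nonneg _)

variable {n : ℕ} {γ r δ : ℝ} {j s : Fin (n + 1) → ℝ} {α : Fin (n + 2) → ℝ} {X : Finset ℝ}
  {f u : ℝ → ℝ}

namespace IsBlurredStep

lemma pottsIn_stepOn_le (hf : IsBlurredStep j α r δ X f) (hγ : IsAdmissible γ α δ r)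
    (hs : ∀ i, IsNearest X (j i) (s i)) (u : ℝ → ℝ) :
    PottsIn γ f X (stepOn s α) ≤ PottsIn γ f X u := by
  by_cases hu : IsPCIn u X
  · rw [pottsIn_of_isPCIn hu, pottsIn_of_isPCIn (hf.separated.isPCIn_stepOn_of_near
      (fun i => hf.abs_sub_lt_of_isNearest (hs i)) α fun i => (hs i).1)]
    exact ENNReal.ofReal_le_ofReal
      ((hf.pottsVal_stepOn_le hγ hs).trans (hf.optimalEnergy_le_pottsVal hγ hu))
  · rw [pottsIn_of_not_isPCIn hu]
    exact le_top

lemma exists_isNearest_of_pottsIn_le (hf : IsBlurredStep j α r δ X f)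
    (hγ : IsAdmissible γ α δ r) (hs : ∀ i, IsNearest X (j i) (s i))
    (hle : PottsIn γ f X u ≤ PottsIn γ f X (stepOn s α)) :
    ∃ s' : Fin (n + 1) → ℝ, (∀ i, IsNearest X (j i) (s' i)) ∧
      ∀ᵐ t ∂mu01, u t = stepOn s' α t := by
  rw [pottsIn_of_isPCIn (hf.separated.isPCIn_stepOn_of_near
    (fun i => hf.abs_sub_lt_of_isNearest (hs i)) α fun i => (hs i).1)] at hle
  by_cases hu : IsPCIn u X
  · rw [pottsIn_of_isPCIn hu,
      ENNReal.ofReal_le_ofReal_iff (pottsVal_nonneg (hγ.pos hf.mesh.pos.le).le _ _)] at hle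
    exact hf.exists_isNearest_of_pottsVal_le hγ hu (hle.trans (hf.pottsVal_stepOn_le hγ hs))
  · rw [pottsIn_of_not_isPCIn hu, top_le_iff] at hle
    exact absurd hle ENNReal.ofReal_ne_top

end IsBlurredStep

lemma hjumpMin_le (α : Fin (n + 2) → ℝ) (i : Fin (n + 1)) :
    hjumpMin α ≤ |α i.succ - α i.castSucc| :=
  Finset.inf'_le (fun i : Fin (n + 1) => |α i.succ - α i.castSucc|) (Finset.mem_univ i)

lemma le_hjumpMax (α : Fin (n + 2) → ℝ) (i : Fin (n + 1)) :
    |α i.succ - α i.castSucc| ≤ hjumpMax α :=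
  Finset.le_sup' (fun i : Fin (n + 1) => |α i.succ - α i.castSucc|) (Finset.mem_univ i)

lemma hjumpMin_le_hjumpMax (α : Fin (n + 2) → ℝ) : hjumpMin α ≤ hjumpMax α :=
  (hjumpMin_le α 0).trans (le_hjumpMax α 0)

lemma hjumpMin_nonneg (α : Fin (n + 2) → ℝ) : 0 ≤ hjumpMin α :=
  Finset.le_inf' _ _ fun _ _ => abs_nonneg _

lemma hjumpMin_pos (hα : ∀ i : Fin (n + 1), α i.castSucc ≠ α i.succ) : 0 < hjumpMin α :=
  (Finset.lt_inf'_iff _).2 fun i _ => abs_sub_pos.2 (hα i).symm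

lemma two_mul_lt_of_lt_mul_hjumpMin (hδ : 0 ≤ δ) (hγ : δ * hjumpMax α < γ)
    (hγ' : γ < (r - 2 * δ) * hjumpMin α) : 2 * δ < r := by
  have hmin := hjumpMin_nonneg α
  have hpos : 0 < (r - 2 * δ) * hjumpMin α :=
    (mul_nonneg hδ (hmin.trans (hjumpMin_le_hjumpMax α))).trans_lt (hγ.trans hγ')
  exact sub_pos.1 (pos_of_mul_pos_left hpos hmin)

lemma isAdmissible_of_lt_hjump (hδ : 0 ≤ δ) (hγ : δ * hjumpMax α < γ)
    (hγ' : γ < (r - 2 * δ) * hjumpMin α) : IsAdmissible γ α δ r := by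
  have hr := two_mul_lt_of_lt_mul_hjumpMin hδ hγ hγ'
  refine ⟨fun i => (mul_le_mul_of_nonneg_left (le_hjumpMax α i) hδ).trans_lt hγ, fun i => ?_⟩
  calc γ + δ * |α i.succ - α i.castSucc|
      < (r - 2 * δ) * hjumpMin α + δ * |α i.succ - α i.castSucc| := add_lt_add_left hγ' _
    _ ≤ (r - 2 * δ) * |α i.succ - α i.castSucc| + δ * |α i.succ - α i.castSucc| :=
        add_le_add_left
          (mul_le_mul_of_nonneg_left (hjumpMin_le α i) (sub_pos.2 hr).le) _
    _ = (r - δ) * |α i.succ - α i.castSucc| := by ring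

end Minimizers

theorem statement_17_general {n : ℕ} {j : Fin (n + 1) → ℝ} {α : Fin (n + 2) → ℝ}
    (hj : StrictMono j) (hj0 : 0 < j 0) (hj1 : j (Fin.last n) < 1) {K : ℝ → ℝ} {κ : ℝ}
    (hK : IsSymmKernel K κ) {X : ℕ → Finset ℝ} {η : ℕ → ℝ} (hX : ∀ k, IsMesh (X k) (η k))
    {γ : ℕ → ℝ} (hγlo : ∀ k, (κ + η k) * hjumpMax α < γ k)
    (hγhi : ∀ k, γ k < (lmin j / 2 - 2 * (κ + η k)) * hjumpMin α) {fk : ℕ → ℝ → ℝ}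
    (hsample : ∀ k, IntegralSampled (X k : Set ℝ) (convK K (stepOn j α)) (fk k) ∨
      PointSampled (X k : Set ℝ) (convK K (stepOn j α)) (fk k))
    {s : ℕ → Fin (n + 1) → ℝ} (hs : ∀ k i, IsNearest (X k) (j i) (s k i)) :
    (∀ k u, PottsIn (γ k) (fk k) (X k) (stepOn (s k) α) ≤ PottsIn (γ k) (fk k) (X k) u) ∧
    (∀ k u, PottsIn (γ k) (fk k) (X k) u ≤ PottsIn (γ k) (fk k) (X k) (stepOn (s k) α) →
      ∃ s' : Fin (n + 1) → ℝ, (∀ i, IsNearest (X k) (j i) (s' i)) ∧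
        ∀ᵐ t ∂mu01, u t = stepOn s' α t) ∧
    ((∀ k, X k ⊆ X (k + 1)) → Icc (0 : ℝ) 1 ⊆ closure (⋃ k, (X k : Set ℝ)) →
      ∀ useq : ℕ → ℝ → ℝ,
        (∀ k v, PottsIn (γ k) (fk k) (X k) (useq k) ≤ PottsIn (γ k) (fk k) (X k) v) →
        Tendsto (fun k => L1dist (useq k) (stepOn j α)) atTop (nhds 0)) := by
  have hδ : ∀ k, 0 < κ + η k := fun k => add_pos hK.pos (hX k).pos
  have hsep := isSeparated_lmin hj hj0 hj1
  have hγ : ∀ k, IsAdmissible (γ k) α (κ + η k) (lmin j / 2) := fun k =>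
    isAdmissible_of_lt_hjump (hδ k).le (hγlo k) (hγhi k)
  have hf : ∀ k, IsBlurredStep j α (lmin j / 2) (κ + η k) (X k) (fk k) := fun k =>
    isBlurredStep_of_sampled hsep hK (hX k) (by
      linarith [two_mul_lt_of_lt_mul_hjumpMin (hδ k).le (hγlo k) (hγhi k), hδ k]) (hsample k)
  have hunique := fun k u => (hf k).exists_isNearest_of_pottsIn_le (u := u) (hγ k) (hs k)
  refine ⟨fun k => (hf k).pottsIn_stepOn_le (hγ k) (hs k), hunique,
    fun hnest hdense useq hmin => ?_⟩
  choose s' hs' hus' using fun k => hunique k (useq k) (hmin k _)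
  have hL1 : ∀ k, L1dist (useq k) (stepOn j α) = L1dist (stepOn (s' k) α) (stepOn j α) := fun k =>
    integral_congr_ae ((hus' k).mono fun t ht => by simp only [ht])
  simp only [hL1]
  exact tendsto_L1dist_stepOn α fun i => tendsto_of_isNearest (monotone_nat_of_le_succ hnest)
    (hdense (hsep.mem_Icc (by linarith [lmin_pos hj hj0 hj1]) i)) fun k => hs' k i

theorem statement_17
    (n : ℕ) (j : Fin (n + 1) → ℝ) (α : Fin (n + 2) → ℝ)
    (hj : StrictMono j) (hj0 : 0 < j 0) (hj1 : j (Fin.last n) < 1)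
    (hadj : ∀ i : Fin (n + 1), α i.castSucc ≠ α i.succ)
    (K : ℝ → ℝ) (κ : ℝ) (hκ : 0 < κ)
    (hKint : Integrable K) (hKpos : ∀ x, 0 ≤ K x)
    (hKsym : ∀ x, K (-x) = K x) (hKnorm : (∫ x, K x) = 1)
    (hKsupp : Function.support K ⊆ Set.Icc (-κ) κ)
    (hKpos0 : ∃ ε > 0, ∀ x : ℝ, |x| < ε → 0 < K x)
    -- the discretization sets `X k` with mesh sizes `η k`
    (X : ℕ → Finset ℝ) (hX0 : ∀ k, (0:ℝ) ∈ X k) (hX1 : ∀ k, (1:ℝ) ∈ X k)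
    (hXsub : ∀ k, (X k : Set ℝ) ⊆ Set.Icc 0 1)
    (η : ℕ → ℝ) (hη : ∀ k, 0 ≤ η k)
    (hmesh : ∀ k, ∀ a ∈ X k, ∀ b ∈ X k, a < b →
      (∀ c ∈ X k, c ≤ a ∨ b ≤ c) → b - a ≤ η k)
    (hbound : ∀ k, κ + η k ≤ hjumpMin α * lmin j / (2 * (8 * hjumpMax α + hjumpMin α)))
    (γ : ℝ)
    (hγlo : ∀ k, 2 * (κ + η k) * hjumpMax α ≤ γ)
    (hγhi : ∀ k, γ ≤ (1 / 2) * hjumpMin α * lmin j -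
      (hjumpMin α + 6 * hjumpMax α) * (κ + η k))
    -- the sampled data `fk k`, obtained from `f = K * g` by integral or point sampling
    (fk : ℕ → ℝ → ℝ)
    (hsample : ∀ k, IntegralSampled (X k : Set ℝ) (convK K (stepOn j α)) (fk k) ∨
                    PointSampled (X k : Set ℝ) (convK K (stepOn j α)) (fk k))
    -- `s k i` is a nearest neighbour in `X k` of the jump location `j i`
    (s : ℕ → Fin (n + 1) → ℝ)
    (hs : ∀ k i, s k i ∈ X k ∧ ∀ p ∈ X k, |j i - s k i| ≤ |j i - p|) :
    -- (1) each `X^k`-discretization `g^k = stepOn (s k) α` minimizes the discrete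
    -- Potts functional
    (∀ k, ∀ u : ℝ → ℝ,
      PottsIn γ (fk k) (X k : Set ℝ) (stepOn (s k) α) ≤ PottsIn γ (fk k) (X k : Set ℝ) u) ∧
    -- (2) such discretizations are the only minimizers
    (∀ k, ∀ u : ℝ → ℝ,
      PottsIn γ (fk k) (X k : Set ℝ) u ≤ PottsIn γ (fk k) (X k : Set ℝ) (stepOn (s k) α) →
      ∃ s' : Fin (n + 1) → ℝ,
        (∀ i, s' i ∈ X k ∧ ∀ p ∈ X k, |j i - s' i| ≤ |j i - p|) ∧
        ∀ᵐ t ∂mu01, u t = stepOn s' α t) ∧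
    -- (3) if the discretization sets are nested with dense union, every sequence of
    -- minimizers converges to `g` in `L¹[0,1]`
    ((∀ k, X k ⊆ X (k + 1)) → Set.Icc (0:ℝ) 1 ⊆ closure (⋃ k, (X k : Set ℝ)) →
      ∀ useq : ℕ → ℝ → ℝ,
        (∀ k, ∀ v : ℝ → ℝ,
          PottsIn γ (fk k) (X k : Set ℝ) (useq k) ≤ PottsIn γ (fk k) (X k : Set ℝ) v) →
        Tendsto (fun k => L1dist (useq k) (stepOn j α)) atTop (nhds 0)) := by
  have hmin := hjumpMin_pos hadj
  have hmax := hjumpMin_le_hjumpMax α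
  have hδ : ∀ k, 0 < κ + η k := fun k => add_pos_of_pos_of_nonneg hκ (hη k)
  exact statement_17_general hj hj0 hj1 ⟨hKint, hKpos, hKsym, hKnorm, hKsupp, hKpos0⟩
    (fun k => ⟨hX0 k, hX1 k, fun a b h =>
      hmesh k a h.left_mem b h.right_mem h.lt h.le_or_le⟩)
    (fun k => by linarith [hγlo k, mul_pos (hδ k) (hmin.trans_le hmax)])
    (fun k => by nlinarith [hγhi k, mul_pos (hδ k) hmin, mul_le_mul_of_nonneg_left hmax (hδ k).le])
    hsample hs
end
end

section
/- Let n ≥ 1 and g_0, g_1, ..., g_n ∈ ℝ. Then for every y ∈ ℝ, Σ_{i=0}^n |g_i − y| ≥ (n/2)·min_{0 ≤ i ≤ n−1} |g_i − g_{i+1}|. -/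
/- By the triangle inequality through `y`, each consecutive distance is at most the sum of the
distances of its two endpoints to `y`; since every point is an endpoint of at most two consecutive
pairs, the consecutive distances add up to at most twice `∑ i, dist (g i) y`. -/

section OrderedSums

variable {M : Type*} [AddCommMonoid M]

theorem sum_castSucc_le_sum [Preorder M] [AddLeftMono M] {n : ℕ} {f : Fin (n + 1) → M}
    (hf : 0 ≤ f (Fin.last n)) : ∑ i : Fin n, f i.castSucc ≤ ∑ i, f i := by
  rw [Fin.sum_univ_castSucc]
  exact le_add_of_nonneg_right hf

theorem sum_succ_le_sum [Preorder M] [AddLeftMono M] {n : ℕ} {f : Fin (n + 1) → M}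
    (hf : 0 ≤ f 0) : ∑ i : Fin n, f i.succ ≤ ∑ i, f i := by
  rw [Fin.sum_univ_succ]
  exact le_add_of_nonneg_left hf

theorem card_nsmul_inf'_le_sum [SemilatticeInf M] [AddLeftMono M] {ι : Type*}
    {s : Finset ι} (hs : s.Nonempty) (f : ι → M) : s.card • s.inf' hs f ≤ ∑ i ∈ s, f i :=
  s.card_nsmul_le_sum f _ fun _ hi ↦ s.inf'_le f hi

end OrderedSums

section ConsecutiveDistances

variable {α : Type*} [PseudoMetricSpace α]

theorem sum_dist_castSucc_succ_le_two_mul_sum_dist {n : ℕ} (g : Fin (n + 1) → α) (y : α) :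
    ∑ i : Fin n, dist (g i.castSucc) (g i.succ) ≤ 2 * ∑ i, dist (g i) y :=
  calc
    ∑ i : Fin n, dist (g i.castSucc) (g i.succ)
      ≤ ∑ i : Fin n, (dist (g i.castSucc) y + dist (g i.succ) y) :=
        Finset.sum_le_sum fun _ _ ↦ dist_triangle_right _ _ _
    _ = ∑ i : Fin n, dist (g i.castSucc) y + ∑ i : Fin n, dist (g i.succ) y :=
        Finset.sum_add_distrib
    _ ≤ ∑ i, dist (g i) y + ∑ i, dist (g i) y :=
        add_le_add (sum_castSucc_le_sum (f := fun i ↦ dist (g i) y) dist_nonneg)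
          (sum_succ_le_sum (f := fun i ↦ dist (g i) y) dist_nonneg)
    _ = 2 * ∑ i, dist (g i) y := (two_mul _).symm

theorem statement_18_general (n : ℕ) (g : Fin (n + 2) → α) (y : α) :
    ((n + 1 : ℕ) : ℝ) / 2 *
        (Finset.univ.inf' Finset.univ_nonempty
          fun i : Fin (n + 1) => dist (g i.castSucc) (g i.succ)) ≤
      ∑ i : Fin (n + 2), dist (g i) y := by
  have hmin := card_nsmul_inf'_le_sum Finset.univ_nonempty
    fun i : Fin (n + 1) ↦ dist (g i.castSucc) (g i.succ)
  rw [Finset.card_fin, nsmul_eq_mul] at hmin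
  have hsum := sum_dist_castSucc_succ_le_two_mul_sum_dist g y
  linarith

end ConsecutiveDistances

/-- For real numbers `g 0, …, g (n+1)` and any `y`,
`Σ_i |g i − y| ≥ ((n+1)/2) · min_i |g i − g (i+1)|`. -/
theorem statement_18 (n : ℕ) (g : Fin (n + 2) → ℝ) (y : ℝ) :
    ((n + 1 : ℕ) : ℝ) / 2 *
        (Finset.univ.inf' Finset.univ_nonempty
          fun i : Fin (n + 1) => |g i.castSucc - g i.succ|) ≤
      ∑ i : Fin (n + 2), |g i - y| :=
  statement_18_general n g y
end

section
/- Let K ∈ L¹(ℝ) with K ≥ 0, K(−x) = K(x) for all x, ∫_ℝ K = 1 and supp K ⊆ [−κ,κ], and let a, b ∈ ℝ and j ∈ ℝ. For the step function g = a·1_{(−∞,j)} + b·1_{[j,∞)} the following hold: (i) K*g(j) = (a+b)/2; (ii) K*g is monotone on [j−κ, j+κ] (nondecreasing if a ≤ b, nonincreasing if a ≥ b); (iii) for every interval J ⊆ [j−κ, j+κ], ‖(g − K*g)·1_J‖_{L¹} ≤ (1/2)·|b − a|·|J|, and if in addition K is strictly positive on a neighborhood of 0 and a ≠ b and |J| >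 0, this inequality is strict. -/
/-!
Let `F` be the distribution function of the kernel `K` and `H` the Heaviside function. For the step
function `g` one has `K*g = a + (b - a) F(· - j)`, so everything is read off from `F`: it is
monotone, with `F 0 = 1/2` by symmetry. Since `F ≤ 1/2` to the left of `0` and `F ≥ 1/2` to the
right, `|H - F| = 1/2 - |F - 1/2|`, so that `|g - K*g| = |b - a| (1/2 - |F(· - j) - 1/2|)`. This is
at most `|b - a| / 2`, with equality for `a ≠ b` only where `F(· - j) = 1/2`; if `K` is positive
near `0`, `j` is the only such point.
-/

open MeasureTheory Set
open scoped Classical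

noncomputable section

open scoped Topology

section

variable {α : Type*} {m : MeasurableSpace α} {μ : Measure α} {f g : α → ℝ}

theorem integral_lt_integral_of_ae_lt [NeZero μ] (hf : Integrable f μ) (hg : Integrable g μ)
    (hfg : ∀ᵐ x ∂μ, f x < g x) : ∫ x, f x ∂μ < ∫ x, g x ∂μ := by
  have hle : f ≤ᵐ[μ] g := hfg.mono fun _ => le_of_lt
  refine (integral_mono_ae hf hg hle).lt_of_ne fun heq => ?_
  obtain ⟨x, hlt, hx⟩ := (hfg.and ((integral_eq_iff_of_ae_le hf hg hle).1 heq)).exists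
  exact hlt.ne hx

end

/-- The step function `a·1_{(-∞,j)} + b·1_{[j,∞)}`; in particular `stepFun 0 1 0` is the Heaviside
function, with value `1` at `0`. -/
def stepFun (a b j : ℝ) : ℝ → ℝ := fun t => if t < j then a else b

/-- The distribution function `x ↦ ∫_{(-∞,x]} K` of a kernel `K` on the line, through which the
convolution of `K` with a step function is expressed. -/
def kernelCDF (K : ℝ → ℝ) (x : ℝ) : ℝ := ∫ s in Iic x, K s

variable {K : ℝ → ℝ} {x y z : ℝ}

theorem stepFun_eq_add_mul_heaviside (a b j t : ℝ) :
    stepFun a b j t = a + (b - a) * stepFun 0 1 0 (t - j) := by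
  simp only [stepFun, sub_neg]
  split_ifs <;> ring

theorem kernelCDF_nonneg (hK0 : 0 ≤ᵐ[volume] K) (x : ℝ) : 0 ≤ kernelCDF K x :=
  setIntegral_nonneg_of_ae hK0

theorem kernelCDF_le_integral (hK : Integrable K) (hK0 : 0 ≤ᵐ[volume] K) (x : ℝ) :
    kernelCDF K x ≤ ∫ s, K s :=
  setIntegral_le_integral hK hK0

theorem monotone_kernelCDF (hK : Integrable K) (hK0 : 0 ≤ᵐ[volume] K) : Monotone (kernelCDF K) :=
  fun _ _ hxy => setIntegral_mono_set hK.integrableOn (ae_restrict_of_ae hK0)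
    (Iic_subset_Iic.2 hxy).eventuallyLE

theorem kernelCDF_zero_of_even (hK : Integrable K) (hKeven : Function.Even K) :
    kernelCDF K 0 = (∫ s, K s) / 2 := by
  have hsplit : kernelCDF K 0 + ∫ s in Ioi 0, K s = ∫ s, K s :=
    intervalIntegral.integral_Iic_add_Ioi hK.integrableOn hK.integrableOn
  have hreflect : kernelCDF K 0 = ∫ s in Ioi 0, K s := by
    simpa only [hKeven _, neg_zero, kernelCDF] using integral_comp_neg_Iic (0 : ℝ) K
  linarith

theorem kernelCDF_lt_kernelCDF (hK : Integrable K) (hK0 : 0 ≤ᵐ[volume] K) (hxy : x < y)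
    (hz : z ∈ Icc x y) (hpos : ∀ᶠ s in 𝓝 z, 0 < K s) : kernelCDF K x < kernelCDF K y := by
  have hne : (interior {s | 0 < K s} ∩ Ioo x y).Nonempty :=
    mem_closure_iff.1 (by rwa [closure_Ioo hxy.ne]) _ isOpen_interior
      (mem_interior_iff_mem_nhds.2 hpos)
  have hsub : interior {s | 0 < K s} ∩ Ioo x y ⊆ Function.support K ∩ Ioc x y := fun s hs =>
    ⟨ne_of_gt (interior_subset (s := {s | 0 < K s}) hs.1), Ioo_subset_Ioc_self hs.2⟩
  have hint : 0 < ∫ s in x..y, K s :=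
    (intervalIntegral.integral_pos_iff_support_of_nonneg_ae hK0 hK.intervalIntegrable).2
      ⟨hxy, ((isOpen_interior.inter isOpen_Ioo).measure_pos volume hne).trans_le
        (measure_mono hsub)⟩
  rwa [← intervalIntegral.integral_Iic_sub_Iic hK.integrableOn hK.integrableOn, sub_pos] at hint

theorem kernelCDF_ne_kernelCDF (hK : Integrable K) (hK0 : 0 ≤ᵐ[volume] K)
    (hpos : ∀ᶠ s in 𝓝 y, 0 < K s) (hxy : x ≠ y) : kernelCDF K x ≠ kernelCDF K y := by
  rcases hxy.lt_or_gt with hlt | hgt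
  · exact (kernelCDF_lt_kernelCDF hK hK0 hlt (right_mem_Icc.2 hlt.le) hpos).ne
  · exact (kernelCDF_lt_kernelCDF hK hK0 hgt (left_mem_Icc.2 hgt.le) hpos).ne'

theorem abs_heaviside_sub_kernelCDF (hK : Integrable K) (hK0 : 0 ≤ᵐ[volume] K)
    (hK1 : ∫ s, K s = 1) (hmed : kernelCDF K 0 = 1 / 2) (x : ℝ) :
    |stepFun 0 1 0 x - kernelCDF K x| = 1 / 2 - |kernelCDF K x - 1 / 2| := by
  have hmono := monotone_kernelCDF hK hK0
  rcases lt_or_ge x 0 with hx | hx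
  · have hhalf : kernelCDF K x ≤ 1 / 2 := hmed ▸ hmono hx.le
    rw [stepFun, if_pos hx, zero_sub, abs_neg, abs_of_nonneg (kernelCDF_nonneg hK0 x),
      abs_of_nonpos (sub_nonpos.2 hhalf)]
    ring
  · have hhalf : 1 / 2 ≤ kernelCDF K x := hmed ▸ hmono hx
    have hone : kernelCDF K x ≤ 1 := hK1 ▸ kernelCDF_le_integral hK hK0 x
    rw [stepFun, if_neg hx.not_gt, abs_of_nonneg (sub_nonneg.2 hone),
      abs_of_nonneg (sub_nonneg.2 hhalf)]
    ring

section Convolution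

variable (a b j : ℝ)

theorem convK_stepFun (hK : Integrable K) (t : ℝ) :
    convK K (stepFun a b j) t = a * (∫ s, K s) + (b - a) * kernelCDF K (t - j) := by
  have hsplit (s : ℝ) : K s * stepFun a b j (t - s)
      = a * K s + (b - a) * (Iic (t - j)).indicator K s := by
    simp only [stepFun, indicator_apply, mem_Iic, sub_lt_comm, ← not_lt (b := s)]
    split_ifs <;> ring
  simp only [convK, hsplit]
  rw [integral_add (hK.const_mul a) ((hK.indicator measurableSet_Iic).const_mul (b - a)),
    integral_const_mul, integral_const_mul, integral_indicator measurableSet_Iic, kernelCDF]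

theorem convK_stepFun_self (hK : Integrable K) (hK1 : ∫ s, K s = 1)
    (hmed : kernelCDF K 0 = 1 / 2) : convK K (stepFun a b j) j = (a + b) / 2 := by
  rw [convK_stepFun a b j hK, hK1, sub_self, hmed]
  ring

variable {a b} in
theorem monotone_convK_stepFun (hK : Integrable K) (hK0 : 0 ≤ᵐ[volume] K) (hab : a ≤ b) :
    Monotone (convK K (stepFun a b j)) := fun s t hst => by
  have hcdf := monotone_kernelCDF hK hK0 (sub_le_sub_right hst j)
  rw [convK_stepFun a b j hK, convK_stepFun a b j hK]
  gcongr

variable {a b} in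
theorem antitone_convK_stepFun (hK : Integrable K) (hK0 : 0 ≤ᵐ[volume] K) (hba : b ≤ a) :
    Antitone (convK K (stepFun a b j)) := fun s t hst => by
  have hcdf := monotone_kernelCDF hK hK0 (sub_le_sub_right hst j)
  rw [convK_stepFun a b j hK, convK_stepFun a b j hK]
  exact add_le_add_right (mul_le_mul_of_nonpos_left hcdf (sub_nonpos.2 hba)) _

end Convolution

section Deviation

variable (hK : Integrable K) (hK0 : 0 ≤ᵐ[volume] K) (hK1 : ∫ s, K s = 1)
  (hmed : kernelCDF K 0 = 1 / 2) (a b j : ℝ) {J : Set ℝ}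
include hK hK0 hK1 hmed

theorem abs_stepFun_sub_convK (t : ℝ) :
    |stepFun a b j t - convK K (stepFun a b j) t|
      = |b - a| * (1 / 2 - |kernelCDF K (t - j) - 1 / 2|) := by
  rw [convK_stepFun a b j hK, hK1, mul_one, stepFun_eq_add_mul_heaviside, add_sub_add_left_eq_sub,
    ← mul_sub, abs_mul, abs_heaviside_sub_kernelCDF hK hK0 hK1 hmed]

theorem abs_stepFun_sub_convK_le (t : ℝ) :
    |stepFun a b j t - convK K (stepFun a b j) t| ≤ 1 / 2 * |b - a| := by
  rw [abs_stepFun_sub_convK hK hK0 hK1 hmed, mul_comm]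
  gcongr
  exact sub_le_self _ (abs_nonneg _)

variable {a b} in
theorem abs_stepFun_sub_convK_lt (hab : a ≠ b) {t : ℝ} (ht : kernelCDF K (t - j) ≠ 1 / 2) :
    |stepFun a b j t - convK K (stepFun a b j) t| < 1 / 2 * |b - a| := by
  rw [abs_stepFun_sub_convK hK hK0 hK1 hmed, mul_comm]
  have : 0 < |b - a| := abs_sub_pos.2 hab.symm
  gcongr
  exact sub_lt_self _ (abs_sub_pos.2 ht)

theorem integrableOn_abs_stepFun_sub_convK (hJ : volume J ≠ ⊤) :
    IntegrableOn (fun t => |stepFun a b j t - convK K (stepFun a b j) t|) J := by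
  have hmeas : Measurable fun t => |stepFun a b j t - convK K (stepFun a b j) t| := by
    have hcdf := (monotone_kernelCDF hK hK0).measurable
    simp only [abs_stepFun_sub_convK hK hK0 hK1 hmed]
    fun_prop
  refine Measure.integrableOn_of_bounded (M := 1 / 2 * |b - a|) hJ hmeas.aestronglyMeasurable
    (ae_of_all _ fun t => ?_)
  exact (abs_abs _).trans_le (abs_stepFun_sub_convK_le hK hK0 hK1 hmed a b j t)

theorem setIntegral_abs_stepFun_sub_convK_le (hJ : volume J ≠ ⊤) :
    ∫ t in J, |stepFun a b j t - convK K (stepFun a b j) t|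
      ≤ 1 / 2 * |b - a| * volume.real J := by
  calc ∫ t in J, |stepFun a b j t - convK K (stepFun a b j) t|
      ≤ ∫ _ in J, 1 / 2 * |b - a| :=
        integral_mono (integrableOn_abs_stepFun_sub_convK hK hK0 hK1 hmed a b j hJ)
          (integrableOn_const hJ) (abs_stepFun_sub_convK_le hK hK0 hK1 hmed a b j)
    _ = 1 / 2 * |b - a| * volume.real J := by
        rw [setIntegral_const, smul_eq_mul, mul_comm]

variable {a b} in
theorem setIntegral_abs_stepFun_sub_convK_lt (huniq : ∀ x ≠ 0, kernelCDF K x ≠ 1 / 2) (hab : a ≠ b)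
    (hJ : volume J ≠ ⊤) (hJ0 : volume J ≠ 0) :
    ∫ t in J, |stepFun a b j t - convK K (stepFun a b j) t|
      < 1 / 2 * |b - a| * volume.real J := by
  have hlt : ∀ᵐ t ∂volume.restrict J,
      |stepFun a b j t - convK K (stepFun a b j) t| < 1 / 2 * |b - a| :=
    (ae_restrict_of_ae (Measure.ae_ne volume j)).mono fun t ht =>
      abs_stepFun_sub_convK_lt hK hK0 hK1 hmed j hab (huniq _ (sub_ne_zero.2 ht))
  have : NeZero (volume.restrict J) := ⟨mt Measure.restrict_eq_zero.1 hJ0⟩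
  calc ∫ t in J, |stepFun a b j t - convK K (stepFun a b j) t|
      < ∫ _ in J, 1 / 2 * |b - a| :=
        integral_lt_integral_of_ae_lt (integrableOn_abs_stepFun_sub_convK hK hK0 hK1 hmed a b j hJ)
          (integrableOn_const hJ) hlt
    _ = 1 / 2 * |b - a| * volume.real J := by
        rw [setIntegral_const, smul_eq_mul, mul_comm]

end Deviation

theorem statement_19_general (hK : Integrable K) (hK0 : 0 ≤ᵐ[volume] K) (hK1 : ∫ s, K s = 1)
    (hmed : kernelCDF K 0 = 1 / 2) (a b j : ℝ) :
    convK K (stepFun a b j) j = (a + b) / 2 ∧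
    (a ≤ b → Monotone (convK K (stepFun a b j))) ∧
    (b ≤ a → Antitone (convK K (stepFun a b j))) ∧
    (∀ J : Set ℝ, volume J ≠ ⊤ →
      ∫ t in J, |stepFun a b j t - convK K (stepFun a b j) t|
        ≤ 1 / 2 * |b - a| * volume.real J) ∧
    ((∀ x ≠ 0, kernelCDF K x ≠ 1 / 2) → a ≠ b → ∀ J : Set ℝ, volume J ≠ ⊤ → volume J ≠ 0 →
      ∫ t in J, |stepFun a b j t - convK K (stepFun a b j) t|
        < 1 / 2 * |b - a| * volume.real J) :=
  ⟨convK_stepFun_self a b j hK hK1 hmed, monotone_convK_stepFun j hK hK0,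
    antitone_convK_stepFun j hK hK0,
    fun _ => setIntegral_abs_stepFun_sub_convK_le hK hK0 hK1 hmed a b j,
    fun huniq hab _ => setIntegral_abs_stepFun_sub_convK_lt hK hK0 hK1 hmed j huniq hab⟩

theorem statement_19
    (K : ℝ → ℝ) (κ : ℝ) (hκ : 0 < κ)
    (hKint : Integrable K) (hKpos : ∀ x, 0 ≤ K x)
    (hKsym : ∀ x, K (-x) = K x) (hKnorm : (∫ x, K x) = 1)
    (hKsupp : Function.support K ⊆ Set.Icc (-κ) κ)
    (a b jp : ℝ) :
    -- (i) the convolution takes the mid-value at the jump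
    convK K (fun t => if t < jp then a else b) jp = (a + b) / 2 ∧
    -- (ii) the convolution is monotone on `[jp−κ, jp+κ]`
    (a ≤ b →
      MonotoneOn (convK K (fun t => if t < jp then a else b)) (Set.Icc (jp - κ) (jp + κ))) ∧
    (b ≤ a →
      AntitoneOn (convK K (fun t => if t < jp then a else b)) (Set.Icc (jp - κ) (jp + κ))) ∧
    -- (iii) on every interval `J ⊆ [jp−κ, jp+κ]`,
    -- `‖(g − K*g)·1_J‖₁ ≤ (1/2)·|b−a|·|J|` …
    (∀ c d : ℝ, jp - κ ≤ c → c ≤ d → d ≤ jp + κ →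
      (∫ t in Set.Ioo c d,
          |(if t < jp then a else b) - convK K (fun t' => if t' < jp then a else b) t|) ≤
        (1 / 2) * |b - a| * (d - c)) ∧
    -- … and the inequality is strict if `K` is strictly positive near `0`, `a ≠ b`
    -- and `J` has positive length
    ((∃ ε > 0, ∀ x : ℝ, |x| < ε → 0 < K x) → a ≠ b →
      ∀ c d : ℝ, jp - κ ≤ c → c < d → d ≤ jp + κ →
        (∫ t in Set.Ioo c d,
            |(if t < jp then a else b) - convK K (fun t' => if t' < jp then a else b) t|) <
          (1 / 2) * |b - a| * (d - c)) := by
  have hK0 : 0 ≤ᵐ[volume] K := ae_of_all _ hKpos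
  have hmed : kernelCDF K 0 = 1 / 2 := hKnorm ▸ kernelCDF_zero_of_even hKint hKsym
  obtain ⟨hmid, hmono, hanti, hle, hlt⟩ := statement_19_general hKint hK0 hKnorm hmed a b jp
  refine ⟨hmid, fun hab => (hmono hab).monotoneOn _, fun hba => (hanti hba).antitoneOn _,
    fun c d _ hcd _ => Real.volume_real_Ioo_of_le hcd ▸ hle (Ioo c d) measure_Ioo_lt_top.ne, ?_⟩
  rintro ⟨ε, hε, hpos⟩ hab c d _ hcd _
  have hnhds : ∀ᶠ s in 𝓝 0, 0 < K s :=
    Metric.eventually_nhds_iff.2 ⟨ε, hε, by simpa using hpos⟩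
  exact Real.volume_real_Ioo_of_le hcd.le ▸
    hlt (fun x hx => hmed ▸ kernelCDF_ne_kernelCDF hKint hK0 hnhds hx) hab (Ioo c d)
      measure_Ioo_lt_top.ne (by simpa using hcd)
end
end
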